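/- Let ℝ^N_+ = { y = (y_1,…,y_N) ∈ ℝ^N : y_1 > 0 } and S > 0. Let w ∈ C^{1,2}([0,S] × closure(ℝ^N_+); ℝ) satisfy |w(s,y)| ≤ e^{C_1|y|²} in (0,S) × ℝ^N_+ for some C_1 > 0. If w fulfills the differential inequality |w_s + Δw| ≤ C_2 |w| in (0,S) × ℝ^N_+ for some C_2 > 0, and w(0,y) = 0 for all y ∈ ℝ^N_+, then w ≡ 0 in [0,S) × ℝ^N_+. -/

import Mathlib

open MeasureTheory Filter Set Metric
open scoped ENNReal Topology

noncomputable section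

/-- The Laplacian of `f : ℝ^N → ℝ`, as the sum of second partial derivatives. -/
def lap {N : ℕ} (f : EuclideanSpace ℝ (Fin N) → ℝ) (x : EuclideanSpace ℝ (Fin N)) : ℝ :=
  ∑ i, fderiv ℝ (fun y => fderiv ℝ f y (EuclideanSpace.single i 1)) x (EuclideanSpace.single i 1)

open scoped ContDiff

/-!
The proof is a Carleman estimate localised in a region that avoids the boundary of the half-space.

Only the pointwise derivatives `w_s` and `Δw` are available, and they need not be jointly
measurable. Sums of translates of `w` still have pointwise derivatives, so a maximum principle for
Riemann sums of such translates shows that the mollifications of `w` satisfy the inequality too;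
equivalently, it holds in the sense of distributions.

The weight exponent is `φ = a G(t) y₁ - k(t) |y|²`. Its spatial Hessian is the multiple `-2 k(t)` of
the identity, so the Carleman identity for `e^φ` leaves only an explicit zeroth-order term besides
divergences. If the time span is at most `1 / (256 C₁)`, then `k` can be kept between `2 C₁` and
`4 C₁`, and for suitable `G` the zeroth-order term grows at least like `a y₁`, which absorbs the
term `C₂ |w|` as `a → ∞`.

The solution, extended by zero to negative times, is cut off along the level sets of
`Θ = G(t) y₁ - (C₁ / a) |y|²`. The sets `{Θ ≥ δ}` with `δ > 0` are bounded, have positive distance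
from the boundary, and avoid the final time because `G` vanishes there. On the shell
`3/4 ≤ Θ ≤ 9/4`, where the cut-off error lives, `k ≥ 2 C₁` and the growth hypothesis give
`e^φ |w| ≤ e^{9a/4}`. Near a point with `w ≠ 0`, where `G` is normalised so that `Θ → 6`, the weight
is at least `e^{5a}` up to a constant factor. As the cut-off error has polynomial coefficients in
`a`, the two are incompatible for large `a`, so `w` vanishes up to time `1 / (256 C₁)`. The time
span does not depend on the starting time, and the argument is iterated.
-/

namespace BackwardUniqueness

/-! ### Directional derivatives -/

section DirDeriv

variable {E : Type*} [NormedAddCommGroup E] [NormedSpace ℝ E] {f g : E → ℝ} {p : E}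

/-- The derivative of `g` in the direction `v`, as a function of the base point. -/
def dirDeriv (v : E) (g : E → ℝ) : E → ℝ := fun p ↦ fderiv ℝ g p v

@[fun_prop]
lemma differentiableAt_of_contDiff_infty (hg : ContDiff ℝ ∞ g) : DifferentiableAt ℝ g p :=
  hg.differentiable (by simp) p

@[fun_prop]
lemma contDiff_dirDeriv (hg : ContDiff ℝ ∞ g) (v : E) : ContDiff ℝ ∞ (dirDeriv v g) :=
  (hg.fderiv_right (by simp)).clm_apply contDiff_const

lemma dirDeriv_const (v : E) (c : ℝ) : dirDeriv v (fun _ ↦ c) = fun _ ↦ 0 := by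
  ext; simp [dirDeriv]

lemma dirDeriv_add (hf : DifferentiableAt ℝ f p) (hg : DifferentiableAt ℝ g p) (v : E) :
    dirDeriv v (fun p ↦ f p + g p) p = dirDeriv v f p + dirDeriv v g p := by
  simp [dirDeriv, fderiv_fun_add hf hg]

lemma dirDeriv_sub (hf : DifferentiableAt ℝ f p) (hg : DifferentiableAt ℝ g p) (v : E) :
    dirDeriv v (fun p ↦ f p - g p) p = dirDeriv v f p - dirDeriv v g p := by
  simp [dirDeriv, fderiv_fun_sub hf hg]

lemma dirDeriv_mul (hf : DifferentiableAt ℝ f p) (hg : DifferentiableAt ℝ g p) (v : E) :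
    dirDeriv v (fun p ↦ f p * g p) p = f p * dirDeriv v g p + dirDeriv v f p * g p := by
  simp [dirDeriv, fderiv_fun_mul hf hg, mul_comm]

lemma dirDeriv_const_mul (c : ℝ) (hf : DifferentiableAt ℝ f p) (v : E) :
    dirDeriv v (fun p ↦ c * f p) p = c * dirDeriv v f p := by
  simp [dirDeriv, fderiv_const_mul hf]

lemma dirDeriv_sq (hf : DifferentiableAt ℝ f p) (v : E) :
    dirDeriv v (fun p ↦ f p ^ 2) p = 2 * f p * dirDeriv v f p := by
  simp only [pow_two, dirDeriv_mul hf hf]; ring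

lemma dirDeriv_sum {ι : Type*} {s : Finset ι} {f : ι → E → ℝ}
    (h : ∀ i ∈ s, DifferentiableAt ℝ (f i) p) (v : E) :
    dirDeriv v (fun p ↦ ∑ i ∈ s, f i p) p = ∑ i ∈ s, dirDeriv v (f i) p := by
  simp [dirDeriv, fderiv_fun_sum h]

lemma dirDeriv_exp (hf : DifferentiableAt ℝ f p) (v : E) :
    dirDeriv v (fun p ↦ Real.exp (f p)) p = Real.exp (f p) * dirDeriv v f p := by
  simp [dirDeriv, fderiv_exp hf]

lemma dirDeriv_dirDeriv_mul (hf : ContDiff ℝ ∞ f) (hg : ContDiff ℝ ∞ g) (v : E) :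
    dirDeriv v (dirDeriv v (fun p ↦ f p * g p)) p = f p * dirDeriv v (dirDeriv v g) p
      + dirDeriv v (dirDeriv v f) p * g p + 2 * (dirDeriv v f p * dirDeriv v g p) := by
  have hfg : dirDeriv v (fun p ↦ f p * g p) = fun p ↦ f p * dirDeriv v g p + dirDeriv v f p * g p :=
    funext fun p ↦ dirDeriv_mul (by fun_prop) (by fun_prop) v
  rw [hfg]
  simp (disch := fun_prop) only [dirDeriv_add, dirDeriv_mul]
  ring

lemma dirDeriv_comm (hg : ContDiff ℝ ∞ g) (v v' : E) :
    dirDeriv v (dirDeriv v' g) p = dirDeriv v' (dirDeriv v g) p := by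
  have hd : DifferentiableAt ℝ (fderiv ℝ g) p :=
    (hg.fderiv_right (m := ∞) (by simp)).differentiable (by simp) p
  have second_fderiv (a b : E) : dirDeriv a (dirDeriv b g) p = fderiv ℝ (fderiv ℝ g) p a b := by
    unfold dirDeriv
    simp [fderiv_clm_apply hd (differentiableAt_const b)]
  rw [second_fderiv, second_fderiv]
  exact hg.contDiffAt.isSymmSndFDerivAt (by simpa using ENat.LEInfty.out) v v'

lemma hasCompactSupport_dirDeriv (hg : HasCompactSupport g) (v : E) :
    HasCompactSupport (dirDeriv v g) :=
  (hg.fderiv (𝕜 := ℝ)).comp_left (g := fun l : E →L[ℝ] ℝ ↦ l v) (by simp)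

lemma support_dirDeriv_subset (v : E) : Function.support (dirDeriv v g) ⊆ tsupport g :=
  fun p hp ↦ support_fderiv_subset ℝ fun h ↦ hp (by simp [dirDeriv, h])

lemma tsupport_dirDeriv_subset (v : E) : tsupport (dirDeriv v g) ⊆ tsupport g :=
  closure_minimal (support_dirDeriv_subset v) (isClosed_tsupport g)

lemma dirDeriv_eq_zero_of_notMem_tsupport (hp : p ∉ tsupport g) (v : E) : dirDeriv v g p = 0 :=
  Function.notMem_support.1 fun h ↦ hp (support_dirDeriv_subset v h)

lemma integrable_dirDeriv [MeasurableSpace E] [BorelSpace E] {μ : Measure E}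
    [IsFiniteMeasureOnCompacts μ] (hg : ContDiff ℝ ∞ g) (hgc : HasCompactSupport g) (v : E) :
    Integrable (dirDeriv v g) μ :=
  (contDiff_dirDeriv hg v).continuous.integrable_of_hasCompactSupport
    (hasCompactSupport_dirDeriv hgc v)

lemma integral_dirDeriv_eq_zero [FiniteDimensional ℝ E] [MeasurableSpace E] [BorelSpace E]
    {μ : Measure E} [μ.IsAddHaarMeasure] (hg : ContDiff ℝ ∞ g) (hgc : HasCompactSupport g) (v : E) :
    ∫ p, dirDeriv v g p ∂μ = 0 := by
  simpa [dirDeriv] using integral_mul_fderiv_eq_neg_fderiv_mul_of_integrable (μ := μ)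
    (f := fun _ ↦ (1 : ℝ)) (g := g) (v := v) (by simp)
    (by simpa using! integrable_dirDeriv hg hgc v)
    (by simpa using hg.continuous.integrable_of_hasCompactSupport hgc)
    (by fun_prop) (fun x _ ↦ hg.differentiable (by simp) x)

end DirDeriv

/-! ### Space-time and the heat operators -/

/-- Space-time, with coordinates `(t, y)`. -/
abbrev SpaceTime (N : ℕ) := ℝ × EuclideanSpace ℝ (Fin N)

variable {N : ℕ} {f g : SpaceTime N → ℝ} {p : SpaceTime N}

instance : (volume : Measure (SpaceTime N)).IsAddHaarMeasure := by
  rw [Measure.volume_eq_prod]; infer_instance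

/-- The unit vector of the time axis. -/
def timeDir : SpaceTime N := (1, 0)

/-- The unit vector of the `i`-th space axis. -/
def spaceDir (i : Fin N) : SpaceTime N := (0, EuclideanSpace.single i 1)

/-- The operator `σ ∂ₜ + Δ`: for `σ = 1` it is the backward heat operator, and for `σ = -1` its
formal adjoint. -/
def heatOp (σ : ℝ) (g : SpaceTime N → ℝ) (p : SpaceTime N) : ℝ :=
  σ * dirDeriv timeDir g p + ∑ i, dirDeriv (spaceDir i) (dirDeriv (spaceDir i) g) p

/-- The space-time divergence of the vector field with time component `F₀` and space
components `F i`. -/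
def divergence (F₀ : SpaceTime N → ℝ) (F : Fin N → SpaceTime N → ℝ) (p : SpaceTime N) : ℝ :=
  dirDeriv timeDir F₀ p + ∑ i, dirDeriv (spaceDir i) (F i) p

@[fun_prop]
lemma contDiff_heatOp (hg : ContDiff ℝ ∞ g) (σ : ℝ) : ContDiff ℝ ∞ (heatOp σ g) := by
  unfold heatOp; fun_prop

lemma heatOp_eq_zero_of_notMem_tsupport (hp : p ∉ tsupport g) (σ : ℝ) : heatOp σ g p = 0 := by
  have hp' (i : Fin N) : p ∉ tsupport (dirDeriv (spaceDir i) g) :=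
    fun h ↦ hp (tsupport_dirDeriv_subset _ h)
  simp [heatOp, dirDeriv_eq_zero_of_notMem_tsupport hp,
    dirDeriv_eq_zero_of_notMem_tsupport (hp' _)]

lemma hasCompactSupport_heatOp (hg : HasCompactSupport g) (σ : ℝ) :
    HasCompactSupport (heatOp σ g) :=
  HasCompactSupport.intro hg fun _ hp ↦ heatOp_eq_zero_of_notMem_tsupport hp σ

lemma heatOp_mul (hf : ContDiff ℝ ∞ f) (hg : ContDiff ℝ ∞ g) (σ : ℝ) :
    heatOp σ (fun p ↦ f p * g p) p = f p * heatOp σ g p + g p * heatOp σ f p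
      + 2 * ∑ i, dirDeriv (spaceDir i) f p * dirDeriv (spaceDir i) g p := by
  unfold heatOp
  rw [dirDeriv_mul (hf.differentiable (by simp) p) (hg.differentiable (by simp) p)]
  simp_rw [dirDeriv_dirDeriv_mul hf hg, Finset.sum_add_distrib, ← Finset.sum_mul, ← Finset.mul_sum]
  ring

section Divergence

variable {F₀ : SpaceTime N → ℝ} {F : Fin N → SpaceTime N → ℝ} {K : Set (SpaceTime N)}
  {a b : SpaceTime N → ℝ}

lemma integrable_divergence (hF₀ : ContDiff ℝ ∞ F₀) (hF : ∀ i, ContDiff ℝ ∞ (F i))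
    (hK : IsCompact K) (hF₀K : ∀ p ∉ K, F₀ p = 0) (hFK : ∀ i, ∀ p ∉ K, F i p = 0) :
    Integrable (divergence F₀ F) :=
  (integrable_dirDeriv hF₀ (HasCompactSupport.intro hK hF₀K) _).add <|
    integrable_finsetSum _ fun i _ ↦
      integrable_dirDeriv (hF i) (HasCompactSupport.intro hK (hFK i)) _

lemma integral_divergence_eq_zero (hF₀ : ContDiff ℝ ∞ F₀) (hF : ∀ i, ContDiff ℝ ∞ (F i))
    (hK : IsCompact K) (hF₀K : ∀ p ∉ K, F₀ p = 0) (hFK : ∀ i, ∀ p ∉ K, F i p = 0) :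
    ∫ p, divergence F₀ F p = 0 := by
  have cF₀ : HasCompactSupport F₀ := HasCompactSupport.intro hK hF₀K
  have cF (i : Fin N) : HasCompactSupport (F i) := HasCompactSupport.intro hK (hFK i)
  have hi (i : Fin N) : Integrable (dirDeriv (spaceDir i) (F i)) :=
    integrable_dirDeriv (hF i) (cF i) _
  simp only [divergence]
  rw [integral_add (integrable_dirDeriv hF₀ cF₀ _) (integrable_finsetSum _ fun i _ ↦ hi i),
    integral_finsetSum _ fun i _ ↦ hi i, integral_dirDeriv_eq_zero hF₀ cF₀]
  simp [integral_dirDeriv_eq_zero (hF _) (cF _)]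

lemma integral_le_of_add_divergence_le (hF₀ : ContDiff ℝ ∞ F₀) (hF : ∀ i, ContDiff ℝ ∞ (F i))
    (hK : IsCompact K) (hF₀K : ∀ p ∉ K, F₀ p = 0) (hFK : ∀ i, ∀ p ∉ K, F i p = 0)
    (ha : Integrable a) (hb : Integrable b) (h : ∀ p, a p + divergence F₀ F p ≤ b p) :
    ∫ p, a p ≤ ∫ p, b p := by
  have hdiv := integrable_divergence hF₀ hF hK hF₀K hFK
  calc ∫ p, a p = ∫ p, (a p + divergence F₀ F p) := by
        rw [integral_add ha hdiv, integral_divergence_eq_zero hF₀ hF hK hF₀K hFK, add_zero]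
    _ ≤ ∫ p, b p := integral_mono (ha.add hdiv) hb h

end Divergence

lemma mul_heatOp_sub_mul_heatOp (hf : ContDiff ℝ ∞ f) (hg : ContDiff ℝ ∞ g) (σ : ℝ) :
    f p * heatOp σ g p - g p * heatOp (-σ) f p = divergence (fun p ↦ σ * (f p * g p))
      (fun i p ↦ f p * dirDeriv (spaceDir i) g p - g p * dirDeriv (spaceDir i) f p) p := by
  have hdiv (i : Fin N) :
      dirDeriv (spaceDir i)
        (fun p ↦ f p * dirDeriv (spaceDir i) g p - g p * dirDeriv (spaceDir i) f p) p
        = f p * dirDeriv (spaceDir i) (dirDeriv (spaceDir i) g) p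
          - g p * dirDeriv (spaceDir i) (dirDeriv (spaceDir i) f) p := by
    simp (disch := fun_prop) only [dirDeriv_sub, dirDeriv_mul]
    ring
  simp (disch := fun_prop) only [divergence, heatOp, dirDeriv_const_mul,
    dirDeriv_mul, hdiv, Finset.sum_sub_distrib, ← Finset.mul_sum]
  ring

/-! ### The Carleman inequality -/

lemma dirDeriv_comp_fst {κ : ℝ → ℝ} (hκ : DifferentiableAt ℝ κ p.1) (v : SpaceTime N) :
    dirDeriv v (fun p ↦ κ p.1) p = v.1 * deriv κ p.1 := by
  have h : HasFDerivAt (fun p : SpaceTime N ↦ κ p.1) _ p :=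
    hκ.hasFDerivAt.comp p (hasFDerivAt_fst (𝕜 := ℝ))
  simp [dirDeriv, h.fderiv]

lemma dirDeriv_spaceDir_comp_fst {κ : ℝ → ℝ} (hκ : ContDiff ℝ ∞ κ) (i : Fin N) :
    dirDeriv (spaceDir i) (fun p ↦ κ p.1) p = 0 := by
  simp [dirDeriv_comp_fst (hκ.differentiable (by simp) p.1), spaceDir]

section CarlemanIdentity

variable (P : Fin N → SpaceTime N → ℝ) (q : SpaceTime N → ℝ) (κ : ℝ → ℝ) (f)

/-- The space components of the vector field whose divergence is the difference of the two sides
of the Carleman identity `carleman_identity`. -/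
def carlemanField (j : Fin N) (p : SpaceTime N) : ℝ :=
  2 * (dirDeriv (spaceDir j) f p * dirDeriv timeDir f p)
    - 4 * (dirDeriv (spaceDir j) f p * ∑ l, P l p * dirDeriv (spaceDir l) f p)
    + 2 * (P j p * ∑ l, dirDeriv (spaceDir l) f p ^ 2)
    + (2 * N - 4) * 2 * (κ p.1 * (f p * dirDeriv (spaceDir j) f p))
    - 2 * (q p * (P j p * f p ^ 2))

variable {P q κ f}

lemma dirDeriv_carlemanField (hf : ContDiff ℝ ∞ f) (hκ : ContDiff ℝ ∞ κ) (hq : ContDiff ℝ ∞ q)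
    (hP : ∀ j, ContDiff ℝ ∞ (P j))
    (hDP : ∀ i j p, dirDeriv (spaceDir i) (P j) p = if i = j then -2 * κ p.1 else 0) (j : Fin N) :
    dirDeriv (spaceDir j) (carlemanField f P q κ j) p
      = 2 * (dirDeriv (spaceDir j) (dirDeriv (spaceDir j) f) p
            * (dirDeriv timeDir f p - 2 * ∑ l, P l p * dirDeriv (spaceDir l) f p
              + (2 * N - 4) * (κ p.1 * f p)))
        + 2 * (dirDeriv (spaceDir j) f p * dirDeriv timeDir (dirDeriv (spaceDir j) f) p)
        + 4 * N * (κ p.1 * dirDeriv (spaceDir j) f p ^ 2)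
        - 4 * (κ p.1 * ∑ l, dirDeriv (spaceDir l) f p ^ 2)
        - 4 * (∑ l, P l p * (dirDeriv (spaceDir j) f p
            * dirDeriv (spaceDir j) (dirDeriv (spaceDir l) f) p))
        + 4 * (∑ l, P j p * (dirDeriv (spaceDir l) f p
            * dirDeriv (spaceDir j) (dirDeriv (spaceDir l) f) p))
        - 2 * (P j p * dirDeriv (spaceDir j) q p * f p ^ 2)
        - 4 * (q p * f p * (P j p * dirDeriv (spaceDir j) f p))
        + 4 * (κ p.1 * q p * f p ^ 2) := by
  have hsum : ∑ l, (P l p * dirDeriv (spaceDir j) (dirDeriv (spaceDir l) f) p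
        + (if j = l then -2 * κ p.1 else 0) * dirDeriv (spaceDir l) f p)
      = (∑ l, P l p * dirDeriv (spaceDir j) (dirDeriv (spaceDir l) f) p)
        - 2 * κ p.1 * dirDeriv (spaceDir j) f p := by
    simp [Finset.sum_add_distrib, sub_eq_add_neg]
  unfold carlemanField
  simp (disch := fun_prop) only [dirDeriv_sub, dirDeriv_add, dirDeriv_const_mul, dirDeriv_mul,
    dirDeriv_sum, dirDeriv_sq, dirDeriv_spaceDir_comp_fst hκ, hDP, if_true, hsum,
    dirDeriv_comm hf timeDir]
  have hcross : ∑ l, P l p * (dirDeriv (spaceDir j) f p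
        * dirDeriv (spaceDir j) (dirDeriv (spaceDir l) f) p)
      = dirDeriv (spaceDir j) f p
        * ∑ l, P l p * dirDeriv (spaceDir j) (dirDeriv (spaceDir l) f) p := by
    rw [Finset.mul_sum]; exact Finset.sum_congr rfl fun l _ ↦ by ring
  simp only [hcross, mul_assoc (2 : ℝ), ← Finset.mul_sum]
  ring

lemma carleman_identity (hf : ContDiff ℝ ∞ f) (hκ : ContDiff ℝ ∞ κ) (hq : ContDiff ℝ ∞ q)
    (hP : ∀ j, ContDiff ℝ ∞ (P j))
    (hDP : ∀ i j p, dirDeriv (spaceDir i) (P j) p = if i = j then -2 * κ p.1 else 0) :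
    2 * ((∑ i, dirDeriv (spaceDir i) (dirDeriv (spaceDir i) f) p) + q p * f p)
        * (dirDeriv timeDir f p - 2 * (∑ j, P j p * dirDeriv (spaceDir j) f p)
          + (2 * N - 4) * (κ p.1 * f p))
      = (-dirDeriv timeDir q p + 2 * (∑ j, P j p * dirDeriv (spaceDir j) q p)
          - 8 * κ p.1 * q p) * f p ^ 2
        + divergence (fun p ↦ q p * f p ^ 2 - ∑ i, dirDeriv (spaceDir i) f p ^ 2)
            (carlemanField f P q κ) p := by
  have hcross : ∑ j, P j p * ∑ l, dirDeriv (spaceDir l) f p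
        * dirDeriv (spaceDir j) (dirDeriv (spaceDir l) f) p
      = ∑ j, ∑ l, P l p * (dirDeriv (spaceDir j) f p
        * dirDeriv (spaceDir j) (dirDeriv (spaceDir l) f) p) := by
    simp only [Finset.mul_sum]
    rw [Finset.sum_comm]
    exact Finset.sum_congr rfl fun l _ ↦ Finset.sum_congr rfl fun j _ ↦ by
      rw [dirDeriv_comm hf (spaceDir j)]
  simp (disch := fun_prop) only [divergence, dirDeriv_carlemanField hf hκ hq hP hDP, dirDeriv_sub,
    dirDeriv_mul, dirDeriv_sum, dirDeriv_sq, Finset.sum_add_distrib, Finset.sum_sub_distrib,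
    ← Finset.mul_sum, ← Finset.sum_mul, hcross, Finset.sum_const, Finset.card_univ,
    Fintype.card_fin, nsmul_eq_mul, mul_assoc (2 : ℝ)]
  ring

end CarlemanIdentity

/-- A weight exponent `φ` usable in the Carleman inequality: smooth, with isotropic spatial Hessian
`-2 κ(t) I` depending only on time. -/
structure CarlemanWeight (φ : SpaceTime N → ℝ) (κ : ℝ → ℝ) : Prop where
  contDiff : ContDiff ℝ ∞ φ
  contDiff_curvature : ContDiff ℝ ∞ κ
  hessian : ∀ i j p, dirDeriv (spaceDir i) (dirDeriv (spaceDir j) φ) p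
    = if i = j then -2 * κ p.1 else 0

/-- The potential `|∇φ|² - ∂ₜφ` of the operator `e^φ (∂ₜ + Δ) e^{-φ}`, up to `Δφ`. -/
def carlemanPotential (φ : SpaceTime N → ℝ) (p : SpaceTime N) : ℝ :=
  (∑ j, dirDeriv (spaceDir j) φ p ^ 2) - dirDeriv timeDir φ p

/-- The zeroth order coefficient `-∂ₜq + 2 ∇φ·∇q - 8κq - 16κ²`, with `q = |∇φ|² - ∂ₜφ`, gained on
the left-hand side of the Carleman inequality. -/
def carlemanGain (φ : SpaceTime N → ℝ) (κ : ℝ → ℝ) (p : SpaceTime N) : ℝ :=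
  -dirDeriv timeDir (carlemanPotential φ) p
    + 2 * (∑ j, dirDeriv (spaceDir j) φ p * dirDeriv (spaceDir j) (carlemanPotential φ) p)
    - 8 * κ p.1 * carlemanPotential φ p - 16 * κ p.1 ^ 2

section Carleman

variable {φ v : SpaceTime N → ℝ} {κ : ℝ → ℝ}

@[fun_prop]
lemma contDiff_carlemanPotential (hφ : ContDiff ℝ ∞ φ) : ContDiff ℝ ∞ (carlemanPotential φ) := by
  unfold carlemanPotential; fun_prop

@[fun_prop]
lemma contDiff_carlemanGain (hφ : ContDiff ℝ ∞ φ) (hκ : ContDiff ℝ ∞ κ) :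
    ContDiff ℝ ∞ (carlemanGain φ κ) := by
  unfold carlemanGain; fun_prop

lemma dirDeriv_exp_mul (hφ : ContDiff ℝ ∞ φ) (hv : ContDiff ℝ ∞ v) (w : SpaceTime N) :
    dirDeriv w (fun p ↦ Real.exp (φ p) * v p) p
      = Real.exp (φ p) * (dirDeriv w φ p * v p + dirDeriv w v p) := by
  simp (disch := fun_prop) only [dirDeriv_mul, dirDeriv_exp]
  ring

lemma dirDeriv_dirDeriv_exp_mul (hφ : ContDiff ℝ ∞ φ) (hv : ContDiff ℝ ∞ v) (w : SpaceTime N) :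
    dirDeriv w (dirDeriv w (fun p ↦ Real.exp (φ p) * v p)) p
      = Real.exp (φ p) * (dirDeriv w (dirDeriv w φ) p * v p + dirDeriv w φ p ^ 2 * v p
        + 2 * (dirDeriv w φ p * dirDeriv w v p) + dirDeriv w (dirDeriv w v) p) := by
  have hfirst : dirDeriv w (fun p ↦ Real.exp (φ p) * v p)
      = fun p ↦ Real.exp (φ p) * (dirDeriv w φ p * v p + dirDeriv w v p) :=
    funext fun _ ↦ dirDeriv_exp_mul hφ hv w
  rw [hfirst, dirDeriv_exp_mul (v := fun p ↦ dirDeriv w φ p * v p + dirDeriv w v p) hφ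
    (by fun_prop)]
  simp (disch := fun_prop) only [dirDeriv_add, dirDeriv_mul]
  ring

namespace CarlemanWeight

lemma exp_mul_heatOp (hφ : CarlemanWeight φ κ) (hv : ContDiff ℝ ∞ v)
    (hf : f = fun p ↦ Real.exp (φ p) * v p) :
    Real.exp (φ p) * heatOp 1 v p
      = ((∑ i, dirDeriv (spaceDir i) (dirDeriv (spaceDir i) f) p) + carlemanPotential φ p * f p)
        + (dirDeriv timeDir f p - 2 * (∑ j, dirDeriv (spaceDir j) φ p * dirDeriv (spaceDir j) f p)
          + (2 * N - 4) * (κ p.1 * f p))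
        + 4 * κ p.1 * f p := by
  have hgrad : ∑ j, dirDeriv (spaceDir j) φ p * dirDeriv (spaceDir j) f p
      = Real.exp (φ p) * ((∑ j, dirDeriv (spaceDir j) φ p ^ 2) * v p
        + ∑ j, dirDeriv (spaceDir j) φ p * dirDeriv (spaceDir j) v p) := by
    rw [Finset.sum_mul, ← Finset.sum_add_distrib, Finset.mul_sum]
    refine Finset.sum_congr rfl fun j _ ↦ ?_
    rw [hf, dirDeriv_exp_mul hφ.contDiff hv]; ring
  rw [hgrad]
  simp only [hf, heatOp, carlemanPotential, dirDeriv_exp_mul hφ.contDiff hv, hφ.hessian,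
    dirDeriv_dirDeriv_exp_mul hφ.contDiff hv, ← Finset.mul_sum, ← Finset.sum_mul,
    Finset.sum_add_distrib, if_true, Finset.sum_const, Finset.card_univ, Fintype.card_fin,
    nsmul_eq_mul]
  ring

lemma carlemanGain_mul_sq_add_divergence_le (hφ : CarlemanWeight φ κ) (hv : ContDiff ℝ ∞ v)
    (hf : f = fun p ↦ Real.exp (φ p) * v p) :
    carlemanGain φ κ p * f p ^ 2
        + divergence (fun p ↦ carlemanPotential φ p * f p ^ 2 - ∑ i, dirDeriv (spaceDir i) f p ^ 2)
            (carlemanField f (fun j ↦ dirDeriv (spaceDir j) φ) (carlemanPotential φ) κ) p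
      ≤ (Real.exp (φ p) * heatOp 1 v p) ^ 2 := by
  have := hφ.contDiff
  have := hφ.contDiff_curvature
  have hfs : ContDiff ℝ ∞ f := by rw [hf]; fun_prop
  have hid := carleman_identity (p := p) hfs hφ.contDiff_curvature
    (contDiff_carlemanPotential hφ.contDiff) (by fun_prop) hφ.hessian
  rw [hφ.exp_mul_heatOp hv hf]
  set A := (∑ i, dirDeriv (spaceDir i) (dirDeriv (spaceDir i) f) p) + carlemanPotential φ p * f p
  set B := dirDeriv timeDir f p - 2 * (∑ j, dirDeriv (spaceDir j) φ p * dirDeriv (spaceDir j) f p)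
    + (2 * N - 4) * (κ p.1 * f p)
  have hgain : carlemanGain φ κ p = (-dirDeriv timeDir (carlemanPotential φ) p
      + 2 * (∑ j, dirDeriv (spaceDir j) φ p * dirDeriv (spaceDir j) (carlemanPotential φ) p)
      - 8 * κ p.1 * carlemanPotential φ p) - 16 * κ p.1 ^ 2 := rfl
  rw [hgain, sub_mul]
  have : (A + B + 4 * κ p.1 * f p) ^ 2 = 2 * A * B - 16 * κ p.1 ^ 2 * f p ^ 2
      + (A + 4 * κ p.1 * f p) ^ 2 + (B + 4 * κ p.1 * f p) ^ 2 := by ring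
  linarith [sq_nonneg (A + 4 * κ p.1 * f p), sq_nonneg (B + 4 * κ p.1 * f p)]

theorem carleman_inequality (hφ : CarlemanWeight φ κ) (hv : ContDiff ℝ ∞ v)
    (hvc : HasCompactSupport v) :
    ∫ p, carlemanGain φ κ p * (Real.exp (φ p) * v p) ^ 2
      ≤ ∫ p, (Real.exp (φ p) * heatOp 1 v p) ^ 2 := by
  have hφs := hφ.contDiff
  have hκ := hφ.contDiff_curvature
  obtain ⟨f, hf⟩ : ∃ f : SpaceTime N → ℝ, f = fun p ↦ Real.exp (φ p) * v p := ⟨_, rfl⟩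
  have hfs : ContDiff ℝ ∞ f := by rw [hf]; fun_prop
  have hfc : HasCompactSupport f := by rw [hf]; exact hvc.mul_left
  have hgain : Integrable fun p ↦ carlemanGain φ κ p * f p ^ 2 :=
    (by fun_prop : Continuous _).integrable_of_hasCompactSupport <|
      HasCompactSupport.intro hfc fun p hp ↦ by simp [image_eq_zero_of_notMem_tsupport hp]
  have hheat : Integrable fun p ↦ (Real.exp (φ p) * heatOp 1 v p) ^ 2 :=
    (by fun_prop : Continuous _).integrable_of_hasCompactSupport <|
      HasCompactSupport.intro hvc fun p hp ↦ by simp [heatOp_eq_zero_of_notMem_tsupport hp]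
  refine le_of_eq_of_le (by rw [hf]) (integral_le_of_add_divergence_le (by fun_prop)
    (fun i ↦ ?_) hfc (fun p hp ↦ ?_) (fun i p hp ↦ ?_) hgain hheat
    fun p ↦ hφ.carlemanGain_mul_sq_add_divergence_le hv hf)
  · unfold carlemanField; fun_prop
  · simp [image_eq_zero_of_notMem_tsupport hp, dirDeriv_eq_zero_of_notMem_tsupport hp]
  · simp [carlemanField, image_eq_zero_of_notMem_tsupport hp,
      dirDeriv_eq_zero_of_notMem_tsupport hp]

end CarlemanWeight

end Carleman

lemma heatOp_const_mul (c : ℝ) (hg : ContDiff ℝ ∞ g) (σ : ℝ) :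
    heatOp σ (fun p ↦ c * g p) p = c * heatOp σ g p := by
  rw [heatOp_mul contDiff_const hg]
  simp [heatOp, dirDeriv_const]

lemma heatOp_sq (hg : ContDiff ℝ ∞ g) (σ : ℝ) :
    heatOp σ (fun p ↦ g p ^ 2) p
      = 2 * (g p * heatOp σ g p) + 2 * ∑ i, dirDeriv (spaceDir i) g p ^ 2 := by
  simp only [pow_two, heatOp_mul hg hg]
  ring

section Localized

/-- Cut-offs `χ` and `ψ` adapted to the weight `e^φ`: `ψ` controls the weighted gradient of `χ`. -/
structure CutoffPair (φ χ ψ : SpaceTime N → ℝ) : Prop where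
  contDiff_inner : ContDiff ℝ ∞ χ
  hasCompactSupport_inner : HasCompactSupport χ
  contDiff_outer : ContDiff ℝ ∞ ψ
  hasCompactSupport_outer : HasCompactSupport ψ
  outer_nonneg : ∀ p, 0 ≤ ψ p
  gradient_le : ∀ p, (∑ i, dirDeriv (spaceDir i) χ p ^ 2) * Real.exp (φ p) ^ 2 ≤ ψ p

/-- The coefficient of the error terms which the cut-offs `χ` and `ψ` create in the Carleman
inequality for a function satisfying `|Lu| ≤ C |u|`. -/
def cutoffError (φ χ ψ : SpaceTime N → ℝ) (C : ℝ) (p : SpaceTime N) : ℝ :=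
  3 * (Real.exp (φ p) * heatOp 1 χ p) ^ 2 + 6 * |heatOp (-1) ψ p| + 12 * (C * ψ p)

variable {φ χ ψ u h : SpaceTime N → ℝ} {κ : ℝ → ℝ} {C : ℝ}

lemma CutoffPair.continuous_cutoffError (hχψ : CutoffPair φ χ ψ) (hφ : Continuous φ) :
    Continuous (cutoffError φ χ ψ C) := by
  have := hχψ.contDiff_inner
  have := hχψ.contDiff_outer
  unfold cutoffError
  fun_prop

lemma cutoffError_eq_zero_of_notMem (hp : p ∉ tsupport χ ∪ tsupport ψ) :
    cutoffError φ χ ψ C p = 0 := by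
  rw [mem_union, not_or] at hp
  simp [cutoffError, heatOp_eq_zero_of_notMem_tsupport hp.1,
    heatOp_eq_zero_of_notMem_tsupport hp.2, image_eq_zero_of_notMem_tsupport hp.2]

lemma CutoffPair.isCompact_union_tsupport (hχψ : CutoffPair φ χ ψ) :
    IsCompact (tsupport χ ∪ tsupport ψ) :=
  hχψ.hasCompactSupport_inner.isCompact.union hχψ.hasCompactSupport_outer.isCompact

lemma CutoffPair.sq_exp_mul_heatOp_mul_le (hχψ : CutoffPair φ χ ψ) (hu : ContDiff ℝ ∞ u) :
    (Real.exp (φ p) * heatOp 1 (fun p ↦ χ p * u p) p) ^ 2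
      ≤ 3 * (Real.exp (φ p) * χ p) ^ 2 * heatOp 1 u p ^ 2
        + 3 * (Real.exp (φ p) * heatOp 1 χ p) ^ 2 * u p ^ 2
        + 12 * (ψ p * ∑ i, dirDeriv (spaceDir i) u p ^ 2) := by
  rw [heatOp_mul hχψ.contDiff_inner hu]
  set Y := ∑ i, dirDeriv (spaceDir i) χ p * dirDeriv (spaceDir i) u p
  have hY : Real.exp (φ p) ^ 2 * Y ^ 2 ≤ ψ p * ∑ i, dirDeriv (spaceDir i) u p ^ 2 :=
    calc Real.exp (φ p) ^ 2 * Y ^ 2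
        ≤ Real.exp (φ p) ^ 2 * ((∑ i, dirDeriv (spaceDir i) χ p ^ 2)
            * ∑ i, dirDeriv (spaceDir i) u p ^ 2) := by
          gcongr; exact Finset.sum_mul_sq_le_sq_mul_sq _ _ _
      _ = ((∑ i, dirDeriv (spaceDir i) χ p ^ 2) * Real.exp (φ p) ^ 2)
            * ∑ i, dirDeriv (spaceDir i) u p ^ 2 := by ring
      _ ≤ ψ p * ∑ i, dirDeriv (spaceDir i) u p ^ 2 := by
          gcongr; exact hχψ.gradient_le p
  have three_sq (x y z : ℝ) : (x + y + z) ^ 2 ≤ 3 * (x ^ 2 + y ^ 2 + z ^ 2) := by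
    linarith [sq_nonneg (x - y), sq_nonneg (y - z), sq_nonneg (x - z)]
  have := three_sq (Real.exp (φ p) * (χ p * heatOp 1 u p))
    (Real.exp (φ p) * (u p * heatOp 1 χ p)) (Real.exp (φ p) * (2 * Y))
  nlinarith

/-- The term `ψ |∇u|²` left over by the cut-off `χ` is traded for `u²` through
`2 ψ |∇u|² = ψ L(u²) - 2 ψ u Lu` and duality. -/
lemma CutoffPair.sq_exp_mul_heatOp_mul_add_divergence_le (hχψ : CutoffPair φ χ ψ)
    (hu : ContDiff ℝ ∞ u) (huh : ∀ p, |u p| ≤ h p)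
    (hLu : ∀ p, χ p ≠ 0 ∨ ψ p ≠ 0 → |heatOp 1 u p| ≤ C * h p) :
    (Real.exp (φ p) * heatOp 1 (fun p ↦ χ p * u p) p) ^ 2
        + divergence (fun p ↦ -1 * (6 * u p ^ 2 * ψ p))
            (fun i p ↦ 6 * u p ^ 2 * dirDeriv (spaceDir i) ψ p
              - ψ p * dirDeriv (spaceDir i) (fun p ↦ 6 * u p ^ 2) p) p
      ≤ (3 * C ^ 2 * (Real.exp (φ p) * χ p) ^ 2 + cutoffError φ χ ψ C p) * h p ^ 2 := by
  have hψ := hχψ.outer_nonneg p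
  have hh : 0 ≤ h p := (abs_nonneg _).trans (huh p)
  have hdual := mul_heatOp_sub_mul_heatOp (f := fun p ↦ 6 * u p ^ 2) (p := p) (by fun_prop)
    hχψ.contDiff_outer (-1)
  rw [neg_neg, heatOp_const_mul (g := fun p ↦ u p ^ 2) 6 (by fun_prop), heatOp_sq hu] at hdual
  rw [← hdual]
  have husq : u p ^ 2 ≤ h p ^ 2 := sq_le_sq' (abs_le.1 (huh p)).1 (abs_le.1 (huh p)).2
  have hχterm : (Real.exp (φ p) * χ p) ^ 2 * heatOp 1 u p ^ 2
      ≤ (Real.exp (φ p) * χ p) ^ 2 * (C * h p) ^ 2 := by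
    rcases eq_or_ne (χ p) 0 with hz | hz
    · simp [hz]
    · exact mul_le_mul_of_nonneg_left (sq_le_sq' (abs_le.1 (hLu p (.inl hz))).1
        (abs_le.1 (hLu p (.inl hz))).2) (sq_nonneg _)
  have hLχterm : (Real.exp (φ p) * heatOp 1 χ p) ^ 2 * u p ^ 2
      ≤ (Real.exp (φ p) * heatOp 1 χ p) ^ 2 * h p ^ 2 := by gcongr
  have hdualterm : u p ^ 2 * heatOp (-1) ψ p ≤ h p ^ 2 * |heatOp (-1) ψ p| :=
    (mul_le_mul_of_nonneg_left (le_abs_self _) (sq_nonneg _)).trans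
      (mul_le_mul_of_nonneg_right husq (abs_nonneg _))
  have hψterm : -(ψ p * (u p * heatOp 1 u p)) ≤ ψ p * (h p * (C * h p)) := by
    rcases eq_or_ne (ψ p) 0 with hz | hz
    · simp [hz]
    · rw [← mul_neg]
      refine mul_le_mul_of_nonneg_left ((neg_le_abs _).trans ?_) hψ
      rw [abs_mul]
      exact mul_le_mul (huh p) (hLu p (.inr hz)) (abs_nonneg _) hh
  have := hχψ.sq_exp_mul_heatOp_mul_le (p := p) hu
  unfold cutoffError
  linarith

lemma CarlemanWeight.localized_inequality (hφ : CarlemanWeight φ κ) (hχψ : CutoffPair φ χ ψ)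
    (hu : ContDiff ℝ ∞ u) (hh : Continuous h) (huh : ∀ p, |u p| ≤ h p)
    (hLu : ∀ p, χ p ≠ 0 ∨ ψ p ≠ 0 → |heatOp 1 u p| ≤ C * h p) :
    ∫ p, carlemanGain φ κ p * (Real.exp (φ p) * χ p) ^ 2 * u p ^ 2
      ≤ ∫ p, (3 * C ^ 2 * (Real.exp (φ p) * χ p) ^ 2 + cutoffError φ χ ψ C p) * h p ^ 2 := by
  have hφs := hφ.contDiff
  have hχ := hχψ.contDiff_inner
  have hψ := hχψ.contDiff_outer
  have hχc := hχψ.hasCompactSupport_inner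
  have hheat : Integrable fun p ↦ (Real.exp (φ p) * heatOp 1 (fun p ↦ χ p * u p) p) ^ 2 :=
    (by fun_prop : Continuous _).integrable_of_hasCompactSupport <|
      HasCompactSupport.intro (K := tsupport fun p ↦ χ p * u p) hχc.mul_right fun p hp ↦ by
        simp [heatOp_eq_zero_of_notMem_tsupport hp]
  have herr : Integrable fun p ↦
      (3 * C ^ 2 * (Real.exp (φ p) * χ p) ^ 2 + cutoffError φ χ ψ C p) * h p ^ 2 := by
    have := hχψ.continuous_cutoffError (C := C) hφs.continuous
    refine (by fun_prop : Continuous _).integrable_of_hasCompactSupport <|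
      HasCompactSupport.intro hχψ.isCompact_union_tsupport fun p hp ↦ ?_
    simp [cutoffError_eq_zero_of_notMem hp,
      image_eq_zero_of_notMem_tsupport fun h ↦ hp (mem_union_left (tsupport ψ) h)]
  calc ∫ p, carlemanGain φ κ p * (Real.exp (φ p) * χ p) ^ 2 * u p ^ 2
      = ∫ p, carlemanGain φ κ p * (Real.exp (φ p) * (χ p * u p)) ^ 2 := by
        congr! 2 with p; ring
    _ ≤ ∫ p, (Real.exp (φ p) * heatOp 1 (fun p ↦ χ p * u p) p) ^ 2 :=
        hφ.carleman_inequality (hχ.mul hu) hχc.mul_right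
    _ ≤ _ := by
        refine integral_le_of_add_divergence_le (by fun_prop) (fun i ↦ by fun_prop)
          hχψ.hasCompactSupport_outer (fun p hp ↦ ?_) (fun i p hp ↦ ?_) hheat herr
          fun p ↦ hχψ.sq_exp_mul_heatOp_mul_add_divergence_le hu huh hLu
        · simp [image_eq_zero_of_notMem_tsupport hp]
        · simp [image_eq_zero_of_notMem_tsupport hp, dirDeriv_eq_zero_of_notMem_tsupport hp]

end Localized

/-! ### Pointwise solutions and the maximum principle -/

/-- `g` is twice differentiable at `0`, with second derivative `d`. -/
def HasSecondDerivAtZero (g : ℝ → ℝ) (d : ℝ) : Prop :=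
  ∃ g' : ℝ → ℝ, (∀ᶠ s in 𝓝 0, HasDerivAt g (g' s) s) ∧ HasDerivAt g' d 0

namespace HasSecondDerivAtZero

variable {g₁ g₂ : ℝ → ℝ} {a b : ℝ}

lemma add (h₁ : HasSecondDerivAtZero g₁ a) (h₂ : HasSecondDerivAtZero g₂ b) :
    HasSecondDerivAtZero (fun s ↦ g₁ s + g₂ s) (a + b) := by
  obtain ⟨g₁', h₁, h₁'⟩ := h₁
  obtain ⟨g₂', h₂, h₂'⟩ := h₂
  refine ⟨fun s ↦ g₁' s + g₂' s, ?_, h₁'.add h₂'⟩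
  filter_upwards [h₁, h₂] with s hs₁ hs₂ using hs₁.add hs₂

lemma const_mul (c : ℝ) (h : HasSecondDerivAtZero g₁ a) :
    HasSecondDerivAtZero (fun s ↦ c * g₁ s) (c * a) := by
  obtain ⟨g₁', h₁, h₁'⟩ := h
  exact ⟨fun s ↦ c * g₁' s, h₁.mono fun s hs ↦ hs.const_mul c, h₁'.const_mul c⟩

lemma zero : HasSecondDerivAtZero (fun _ ↦ 0) 0 :=
  ⟨fun _ ↦ 0, .of_forall fun s ↦ hasDerivAt_const s 0, hasDerivAt_const _ _⟩

lemma congr_of_eventuallyEq (h : HasSecondDerivAtZero g₁ a) (heq : g₂ =ᶠ[𝓝 0] g₁) :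
    HasSecondDerivAtZero g₂ a := by
  obtain ⟨g₁', h₁, h₁'⟩ := h
  refine ⟨g₁', ?_, h₁'⟩
  filter_upwards [h₁, heq.eventuallyEq_nhds] with s hs hs' using hs.congr_of_eventuallyEq hs'

lemma nonpos_of_isLocalMax (h : HasSecondDerivAtZero g₁ a) (hmax : IsLocalMax g₁ 0) : a ≤ 0 := by
  obtain ⟨g₁', h₁, h₁'⟩ := h
  have deriv_eq : deriv g₁ =ᶠ[𝓝 0] g₁' := h₁.mono fun s hs ↦ hs.deriv
  have second_deriv : deriv (deriv g₁) 0 = a := deriv_eq.deriv_eq.trans h₁'.deriv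
  by_contra! ha
  have hmin : IsLocalMin g₁ 0 := isLocalMin_of_deriv_deriv_pos (second_deriv ▸ ha)
    hmax.deriv_eq_zero h₁.self_of_nhds.continuousAt
  have locally_const : g₁ =ᶠ[𝓝 0] fun _ ↦ g₁ 0 := by
    filter_upwards [hmax, hmin] with s hs hs' using le_antisymm hs hs'
  have : deriv (deriv g₁) 0 = 0 := by simpa using locally_const.deriv.deriv_eq
  linarith

end HasSecondDerivAtZero

section Line

variable {E : Type*} [NormedAddCommGroup E] [NormedSpace ℝ E] {h : E → ℝ} {x v : E} {s : ℝ}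

lemma hasDerivAt_comp_line (hh : DifferentiableAt ℝ h (x + s • v)) :
    HasDerivAt (fun s : ℝ ↦ h (x + s • v)) (dirDeriv v h (x + s • v)) s := by
  have hline : HasDerivAt (fun s : ℝ ↦ x + s • v) v s := by
    simpa using ((hasDerivAt_id s).smul_const v).const_add x
  exact hh.hasFDerivAt.comp_hasDerivAt s hline

lemma tendsto_line (x v : E) : Tendsto (fun s : ℝ ↦ x + s • v) (𝓝 0) (𝓝 x) := by
  simpa using (by fun_prop : Continuous fun s : ℝ ↦ x + s • v).tendsto 0

lemma hasSecondDerivAtZero_comp_line (hh : ContDiffAt ℝ 2 h x) (v : E) :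
    HasSecondDerivAtZero (fun s ↦ h (x + s • v)) (dirDeriv v (dirDeriv v h) x) := by
  have hnear : ∀ᶠ y in 𝓝 x, DifferentiableAt ℝ h y :=
    (hh.eventually (by simp)).mono fun y hy ↦ hy.differentiableAt (by simp)
  have hfderiv : DifferentiableAt ℝ (dirDeriv v h) x :=
    ((hh.fderiv_right (m := 1) (by norm_num)).differentiableAt (by simp)).clm_apply
      (differentiableAt_const v)
  refine ⟨fun s ↦ dirDeriv v h (x + s • v),
    ((tendsto_line x v).eventually hnear).mono fun s hs ↦ hasDerivAt_comp_line hs, ?_⟩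
  simpa using hasDerivAt_comp_line (v := v) (s := 0) (by simpa using hfderiv)

end Line

/-- The pointwise partial derivatives entering `∂ₜ + Δ` exist for `V` at `p`, and the value of
`(∂ₜ + Δ) V` there is `ℓ`. -/
def HasHeatAt (V : SpaceTime N → ℝ) (ℓ : ℝ) (p : SpaceTime N) : Prop :=
  ∃ (d₀ : ℝ) (d : Fin N → ℝ), HasDerivAt (fun s : ℝ ↦ V (p + s • timeDir)) d₀ 0 ∧
    (∀ i, HasSecondDerivAtZero (fun s ↦ V (p + s • spaceDir i)) (d i)) ∧ d₀ + ∑ i, d i = ℓ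

lemma hasHeatAt_heatOp (hg : ContDiff ℝ ∞ g) (p : SpaceTime N) :
    HasHeatAt g (heatOp 1 g p) p :=
  ⟨dirDeriv timeDir g p, fun i ↦ dirDeriv (spaceDir i) (dirDeriv (spaceDir i) g) p,
    by simpa using hasDerivAt_comp_line (v := timeDir) (s := 0) (by fun_prop),
    fun i ↦ hasSecondDerivAtZero_comp_line
      (hg.of_le (by simpa using ENat.LEInfty.out)).contDiffAt _,
    by simp [heatOp]⟩

namespace HasHeatAt

variable {V W : SpaceTime N → ℝ} {a b : ℝ}

lemma add (hV : HasHeatAt V a p) (hW : HasHeatAt W b p) :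
    HasHeatAt (fun q ↦ V q + W q) (a + b) p := by
  obtain ⟨d₀, d, hd₀, hd, rfl⟩ := hV
  obtain ⟨e₀, e, he₀, he, rfl⟩ := hW
  refine ⟨d₀ + e₀, fun i ↦ d i + e i, hd₀.add he₀, fun i ↦ (hd i).add (he i), ?_⟩
  rw [Finset.sum_add_distrib]; ring

lemma const_mul (c : ℝ) (hV : HasHeatAt V a p) : HasHeatAt (fun q ↦ c * V q) (c * a) p := by
  obtain ⟨d₀, d, hd₀, hd, rfl⟩ := hV
  refine ⟨c * d₀, fun i ↦ c * d i, hd₀.const_mul c, fun i ↦ (hd i).const_mul c, ?_⟩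
  rw [← Finset.mul_sum, mul_add]

lemma zero : HasHeatAt (fun _ ↦ 0) 0 p :=
  ⟨0, 0, hasDerivAt_const _ _, fun _ ↦ .zero, by simp⟩

lemma sum {ι : Type*} {s : Finset ι} {V : ι → SpaceTime N → ℝ} {a : ι → ℝ}
    (h : ∀ j ∈ s, HasHeatAt (V j) (a j) p) :
    HasHeatAt (fun q ↦ ∑ j ∈ s, V j q) (∑ j ∈ s, a j) p := by
  classical
  induction s using Finset.induction_on with
  | empty => simpa using zero
  | insert j s hj ih =>
    simp_rw [Finset.sum_insert hj]
    exact (h j (by simp)).add (ih fun k hk ↦ h k (by simp [hk]))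

lemma comp_add_right (y : SpaceTime N) (h : HasHeatAt V a (p + y)) :
    HasHeatAt (fun q ↦ V (q + y)) a p := by
  simpa only [HasHeatAt, add_right_comm p y] using h

lemma nonpos_of_isLocalMax (h : HasHeatAt V a p) (hmax : IsLocalMax V p) : a ≤ 0 := by
  obtain ⟨d₀, d, hd₀, hd, rfl⟩ := h
  have hline (v : SpaceTime N) : IsLocalMax (fun s : ℝ ↦ V (p + s • v)) 0 := by
    filter_upwards [(tendsto_line p v).eventually hmax] with s hs using by simpa using hs
  rw [(hline timeDir).hasDerivAt_eq_zero hd₀, zero_add]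
  exact Finset.sum_nonpos fun i _ ↦ (hd i).nonpos_of_isLocalMax (hline _)

end HasHeatAt

lemma le_heatOp_of_approx {W : SpaceTime N → ℝ} {A r : ℝ} (hW : ContDiff ℝ ∞ W) (hr : 0 < r)
    (happrox : ∀ δ > 0, ∃ F : SpaceTime N → ℝ, ContinuousOn F (closedBall p r) ∧
      (∀ q ∈ closedBall p r, |F q - W q| ≤ δ) ∧ ∀ q ∈ ball p r, ∃ ℓ ≥ A, HasHeatAt F ℓ q) :
    A ≤ heatOp 1 W p := by
  by_contra! hlt
  have hLW : Continuous (heatOp 1 W) := (contDiff_heatOp hW 1).continuous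
  obtain ⟨ε, hε, hεA⟩ : ∃ ε > 0, heatOp 1 W p < A - ε :=
    ⟨(A - heatOp 1 W p) / 2, by linarith, by linarith⟩
  obtain ⟨r', hr', hball⟩ :=
    Metric.mem_nhds_iff.1 (hLW.continuousAt.eventually_lt_const hεA)
  obtain ⟨ρ, hρ, hρr, hρr'⟩ : ∃ ρ > 0, ρ ≤ r ∧ ρ < r' :=
    ⟨min r (r' / 2), by positivity, min_le_left _ _, by linarith [min_le_right r (r' / 2)]⟩
  let β : ContDiffBump p := ⟨ρ / 2, ρ, by positivity, by linarith⟩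
  have hβ : ContDiff ℝ ∞ β := β.contDiff
  obtain ⟨M, hM⟩ := (contDiff_heatOp hβ 1).continuous.bounded_above_of_compact_support
    (hasCompactSupport_heatOp β.hasCompactSupport 1)
  have hM₀ : 0 ≤ M := (norm_nonneg _).trans (hM p)
  obtain ⟨η, hη, hηM⟩ : ∃ η > 0, η * M ≤ ε :=
    ⟨ε / (M + 1), by positivity, by rw [div_mul_eq_mul_div, div_le_iff₀ (by positivity)]; nlinarith⟩
  obtain ⟨F, hFc, hFW, hF⟩ := happrox (η / 3) (by positivity)
  have hcont : ContinuousOn (fun q ↦ F q + -1 * W q + η * β q) (closedBall p ρ) :=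
    ((hFc.mono (closedBall_subset_closedBall hρr)).add
      (hW.continuous.const_mul _).continuousOn).add (β.continuous.const_mul η).continuousOn
  obtain ⟨q, hq, hmax⟩ := (isCompact_closedBall p ρ).exists_isLocalMax_mem_open
      ball_subset_closedBall hcont (mem_closedBall_self hρ.le) (fun q hq ↦ by
    have hβq : β q = 0 := β.zero_of_le_dist (not_lt.1 hq.2)
    have hβp : β p = 1 := β.one_of_mem_closedBall (mem_closedBall_self β.rIn_pos.le)
    have hFWq := (abs_le.1 (hFW q (closedBall_subset_closedBall hρr hq.1))).2
    have hFWp := (abs_le.1 (hFW p (mem_closedBall_self hr.le))).1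
    rw [hβq, hβp]
    linarith) isOpen_ball
  obtain ⟨ℓ, hℓ, hFℓ⟩ := hF q (ball_subset_ball hρr hq)
  have hnonpos := ((hFℓ.add ((hasHeatAt_heatOp hW q).const_mul (-1))).add
    ((hasHeatAt_heatOp hβ q).const_mul η)).nonpos_of_isLocalMax hmax
  have hLWq : heatOp 1 W q < A - ε := hball (ball_subset_ball hρr'.le hq)
  have hLβq : η * -M ≤ η * heatOp 1 β q :=
    mul_le_mul_of_nonneg_left (neg_le_of_abs_le (hM q)) hη.le
  linarith

/-! ### Convolution -/

section Convolve

open scoped Convolution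

variable {ρ V : SpaceTime N → ℝ}

/-- The convolution `V ⋆ ρ`, written as a real integral so that the heat operators can be moved
onto the kernel `z ↦ ρ (p - z)`. -/
def convolve (V ρ : SpaceTime N → ℝ) (p : SpaceTime N) : ℝ := ∫ z, V z * ρ (p - z)

lemma convolve_eq_convolution (V ρ : SpaceTime N → ℝ) :
    convolve V ρ = V ⋆[ContinuousLinearMap.lsmul ℝ ℝ, volume] ρ := by
  ext p; simp [convolve, convolution_def]

lemma convolve_eq_integral_sub (V ρ : SpaceTime N → ℝ) (p : SpaceTime N) :
    convolve V ρ p = ∫ z, V (p - z) * ρ z := by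
  rw [convolve, ← integral_sub_left_eq_self (fun z ↦ V (p - z) * ρ z) volume p]
  simp

lemma contDiff_convolve (hV : Continuous V) (hρ : ContDiff ℝ ∞ ρ) (hρc : HasCompactSupport ρ) :
    ContDiff ℝ ∞ (convolve V ρ) := by
  rw [convolve_eq_convolution]
  exact hρc.contDiff_convolution_right _ hV.locallyIntegrable hρ

lemma integrable_mul_comp_sub (hV : Continuous V) (hρ : Continuous ρ) (hρc : HasCompactSupport ρ)
    (p : SpaceTime N) : Integrable fun z ↦ V z * ρ (p - z) :=
  (by fun_prop : Continuous fun z ↦ V z * ρ (p - z)).integrable_of_hasCompactSupport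
    (hρc.comp_homeomorph (Homeomorph.subLeft p)).mul_left

lemma dirDeriv_convolve (hV : Continuous V) (hρ : ContDiff ℝ ∞ ρ) (hρc : HasCompactSupport ρ)
    (v : SpaceTime N) : dirDeriv v (convolve V ρ) = convolve V (dirDeriv v ρ) := by
  ext p
  have hρ₁ : ContDiff ℝ 1 ρ := hρ.of_le (by simp)
  rw [convolve_eq_convolution, convolve_eq_convolution, dirDeriv,
    (hρc.hasFDerivAt_convolution_right (ContinuousLinearMap.lsmul ℝ ℝ)
      hV.locallyIntegrable hρ₁ p).fderiv,
    convolution_precompR_apply _ hV.locallyIntegrable (hρc.fderiv (𝕜 := ℝ))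
      (hρ₁.continuous_fderiv (by simp))]
  rfl

lemma heatOp_convolve (hV : Continuous V) (hρ : ContDiff ℝ ∞ ρ) (hρc : HasCompactSupport ρ)
    (σ : ℝ) : heatOp σ (convolve V ρ) = convolve V (heatOp σ ρ) := by
  ext p
  have hDρ (v : SpaceTime N) := contDiff_dirDeriv hρ v
  have hDρc (v : SpaceTime N) := hasCompactSupport_dirDeriv hρc v
  have integrable_time := integrable_mul_comp_sub hV (hDρ timeDir).continuous (hDρc _) p
  have integrable_space (i : Fin N) := integrable_mul_comp_sub hV
    (contDiff_dirDeriv (hDρ (spaceDir i)) (spaceDir i)).continuous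
    (hasCompactSupport_dirDeriv (hDρc _) _) p
  simp only [heatOp, dirDeriv_convolve hV hρ hρc, dirDeriv_convolve hV (hDρ _) (hDρc _)]
  simp only [convolve]
  rw [← integral_const_mul, ← integral_finsetSum _ fun i _ ↦ integrable_space i,
    ← integral_add (integrable_time.const_mul _) (integrable_finsetSum _ fun i _ ↦
      integrable_space i)]
  congr with z
  rw [heatOp, mul_add, Finset.mul_sum]
  ring

lemma dirDeriv_comp_sub_left (hρ : ContDiff ℝ ∞ ρ) (p v : SpaceTime N) :
    dirDeriv v (fun z ↦ ρ (p - z)) = fun z ↦ -1 * dirDeriv v ρ (p - z) := by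
  ext z
  have hcomp : HasFDerivAt (fun z ↦ ρ (p - z)) _ z :=
    (hρ.differentiable (by simp) (p - z)).hasFDerivAt.comp z ((hasFDerivAt_id z).const_sub p)
  rw [dirDeriv, hcomp.fderiv]
  simp [dirDeriv]

lemma heatOp_comp_sub_left (hρ : ContDiff ℝ ∞ ρ) (σ : ℝ) (p z : SpaceTime N) :
    heatOp (-σ) (fun z ↦ ρ (p - z)) z = heatOp σ ρ (p - z) := by
  have (v : SpaceTime N) : ContDiff ℝ ∞ fun z ↦ dirDeriv v ρ (p - z) := by
    have := contDiff_dirDeriv hρ v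
    fun_prop
  simp (disch := fun_prop) only [heatOp, dirDeriv_comp_sub_left hρ, dirDeriv_const_mul,
    dirDeriv_comp_sub_left (contDiff_dirDeriv hρ _)]
  ring_nf

lemma heatOp_convolve_eq_integral (hV : Continuous V) (hρ : ContDiff ℝ ∞ ρ)
    (hρc : HasCompactSupport ρ) (σ : ℝ) (p : SpaceTime N) :
    heatOp σ (convolve V ρ) p = ∫ z, V z * heatOp (-σ) (fun z ↦ ρ (p - z)) z := by
  rw [heatOp_convolve hV hρ hρc]
  simp only [convolve, heatOp_comp_sub_left hρ]

end Convolve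

/-! ### From pointwise to distributional inequalities -/

lemma integral_comp_simpleFunc {α β : Type*} [MeasurableSpace α] {μ : Measure α}
    [IsFiniteMeasure μ] (π : SimpleFunc α β) (F : β → ℝ) :
    ∫ z, F (π z) ∂μ = ∑ y ∈ π.range, μ.real (π ⁻¹' {y}) * F y := by
  classical
  have hdecomp (z : α) :
      F (π z) = ∑ y ∈ π.range, (π ⁻¹' {y}).indicator (fun _ ↦ F y) z := by
    simp only [indicator_apply, mem_preimage, mem_singleton_iff]
    rw [Finset.sum_ite_eq, if_pos (π.mem_range_self z)]
  simp_rw [hdecomp]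
  rw [integral_finsetSum _ fun y _ ↦ (integrable_const _).indicator (π.measurableSet_fiber y)]
  simp [integral_indicator_const, π.measurableSet_fiber]

lemma exists_le_hasHeatAt_integral_simpleFunc {V g : SpaceTime N → ℝ} {O : Set (SpaceTime N)}
    {μ : Measure (SpaceTime N)} [IsFiniteMeasure μ] (hVg : ∀ p ∈ O, ∃ ℓ ≥ g p, HasHeatAt V ℓ p)
    (π : SimpleFunc (SpaceTime N) (SpaceTime N)) (hπ : ∀ z, p + π z ∈ O) :
    ∃ ℓ ≥ ∫ z, g (p + π z) ∂μ, HasHeatAt (fun q ↦ ∫ z, V (q + π z) ∂μ) ℓ p := by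
  choose! ℓ hgℓ hℓ using hVg
  simp_rw [fun q ↦ integral_comp_simpleFunc (μ := μ) π fun y ↦ V (q + y),
    integral_comp_simpleFunc π fun y ↦ g (p + y)]
  have mem_O {y} (hy : y ∈ π.range) : p + y ∈ O := by
    obtain ⟨z, rfl⟩ := SimpleFunc.mem_range.1 hy
    exact hπ z
  exact ⟨∑ y ∈ π.range, μ.real (π ⁻¹' {y}) * ℓ (p + y),
    Finset.sum_le_sum fun y hy ↦ mul_le_mul_of_nonneg_left (hgℓ _ (mem_O hy)) measureReal_nonneg,
    .sum fun y hy ↦ ((hℓ _ (mem_O hy)).comp_add_right y).const_mul _⟩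

lemma exists_simpleFunc_dist_lt {α : Type*} [PseudoMetricSpace α] [MeasurableSpace α]
    [OpensMeasurableSpace α] {K : Set α} (hK : IsCompact K) (hne : K.Nonempty) {γ : ℝ}
    (hγ : 0 < γ) : ∃ π : SimpleFunc α α, (∀ z, π z ∈ K) ∧ ∀ z ∈ K, dist (π z) z < γ := by
  obtain ⟨s, hsK, hs, hcover⟩ := hK.finite_cover_balls hγ
  have hs_ne : s.Nonempty := by
    obtain ⟨z, hz⟩ := hne
    obtain ⟨y, hy, -⟩ := mem_iUnion₂.1 (hcover hz)
    exact ⟨y, hy⟩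
  obtain ⟨e, rfl⟩ := hs.countable.exists_eq_range hs_ne
  obtain ⟨n, hn⟩ : ∃ n, K ⊆ ⋃ k ≤ n, ball (e k) γ := by
    obtain ⟨t, ht⟩ := hK.elim_finite_subcover (fun k ↦ ball (e k) γ) (fun _ ↦ isOpen_ball)
      (by simpa using hcover)
    exact ⟨t.sup id, ht.trans <| iUnion₂_subset fun k hk ↦
      subset_iUnion₂_of_subset k (Finset.le_sup (f := id) hk) subset_rfl⟩
  refine ⟨SimpleFunc.nearestPt e n, fun z ↦ hsK (mem_range_self _), fun z hz ↦ ?_⟩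
  obtain ⟨k, hk, hzk⟩ := mem_iUnion₂.1 (hn hz)
  have hle := SimpleFunc.edist_nearestPt_le e z hk
  rw [edist_dist, edist_dist, ENNReal.ofReal_le_ofReal_iff dist_nonneg] at hle
  exact hle.trans_lt (mem_ball'.1 hzk)

lemma exists_abs_integral_comp_sub_le {V : SpaceTime N → ℝ} (hV : Continuous V)
    {μ : Measure (SpaceTime N)} [IsFiniteMeasure μ] {K : Set (SpaceTime N)} (hK : IsCompact K)
    (hμ : ∀ᵐ z ∂μ, z ∈ K) {δ : ℝ} (hδ : 0 < δ) :
    ∃ γ > 0, ∀ S T : SpaceTime N → SpaceTime N, Measurable S → Measurable T →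
      (∀ z ∈ K, dist (S z) z ≤ 1) → (∀ z ∈ K, dist (T z) z ≤ 1) →
      (∀ z ∈ K, dist (T z) (S z) < γ) → |∫ z, V (T z) ∂μ - ∫ z, V (S z) ∂μ| ≤ δ := by
  have hK' : IsCompact (cthickening 1 K) := hK.cthickening
  obtain ⟨M, hM⟩ := hK'.exists_bound_of_continuousOn hV.continuousOn
  have : 0 ≤ μ.real univ := measureReal_nonneg
  obtain ⟨γ, hγ, huc⟩ := Metric.uniformContinuousOn_iff.1
    (hK'.uniformContinuousOn_of_continuous hV.continuousOn) (δ / (μ.real univ + 1)) (by positivity)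
  have near {T : SpaceTime N → SpaceTime N} (hT : ∀ z ∈ K, dist (T z) z ≤ 1) (z) (hz : z ∈ K) :
      T z ∈ cthickening 1 K := mem_cthickening_of_dist_le _ _ _ _ hz (hT z hz)
  have integrable_comp {T : SpaceTime N → SpaceTime N} (hTm : Measurable T)
      (hT : ∀ z ∈ K, dist (T z) z ≤ 1) : Integrable (fun z ↦ V (T z)) μ :=
    .of_bound (hV.measurable.comp hTm).aestronglyMeasurable M
      (hμ.mono fun z hz ↦ hM _ (near hT z hz))
  refine ⟨γ, hγ, fun S T hSm hTm hS hT hST ↦ ?_⟩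
  rw [← integral_sub (integrable_comp hTm hT) (integrable_comp hSm hS)]
  have hbound : ∀ᵐ z ∂μ, ‖V (T z) - V (S z)‖ ≤ δ / (μ.real univ + 1) := hμ.mono fun z hz ↦
    (huc _ (near hT z hz) _ (near hS z hz) (hST z hz)).le
  refine (norm_integral_le_of_norm_le_const hbound).trans ?_
  rw [div_mul_eq_mul_div, div_le_iff₀ (by positivity)]
  nlinarith

/-- The pointwise derivatives of `V` need not be jointly measurable, so the operator cannot be moved
under the integral; Riemann sums of translates have pointwise derivatives. -/
lemma integral_le_heatOp_of_hasHeatAt {V W g : SpaceTime N → ℝ} {O K : Set (SpaceTime N)}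
    {μ : Measure (SpaceTime N)} [IsFiniteMeasure μ] (hV : Continuous V) (hg : Continuous g)
    (hO : IsOpen O) (hVg : ∀ p ∈ O, ∃ ℓ ≥ g p, HasHeatAt V ℓ p) (hK : IsCompact K)
    (hne : K.Nonempty) (hKO : K ⊆ O) (hμ : ∀ᵐ z ∂μ, z ∈ K) (hW : ContDiff ℝ ∞ W)
    (hWV : ∀ q, W q = ∫ z, V (q + z) ∂μ) : ∫ z, g z ∂μ ≤ heatOp 1 W 0 := by
  refine le_of_forall_pos_le_add fun ε hε ↦ sub_le_iff_le_add.1 ?_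
  obtain ⟨r₀, hr₀, hthick⟩ := hK.exists_cthickening_subset_open hO hKO
  obtain ⟨γ, hγ, hgγ⟩ := exists_abs_integral_comp_sub_le hg hK hμ hε
  obtain ⟨r, hr, hmin⟩ : ∃ r > 0, 2 * r ≤ min 1 (min r₀ γ) :=
    ⟨min 1 (min r₀ γ) / 2, by positivity, by linarith⟩
  obtain ⟨hr₁, hrr₀, hrγ⟩ : 2 * r ≤ 1 ∧ 2 * r ≤ r₀ ∧ 2 * r ≤ γ := by
    simpa only [le_min_iff] using hmin
  refine le_heatOp_of_approx hW hr fun δ hδ ↦ ?_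
  obtain ⟨γ', hγ', hVγ'⟩ := exists_abs_integral_comp_sub_le hV hK hμ hδ
  obtain ⟨π, hπK, hπ⟩ := exists_simpleFunc_dist_lt hK hne (lt_min hr hγ')
  have dist_translate {q : SpaceTime N} (hq : ‖q‖ ≤ r) {y z : SpaceTime N} (hyz : dist y z < r) :
      dist (q + y) z < 2 * r := by
    linarith [dist_triangle (q + y) y z, dist_add_self_left y q]
  have hπr (z) (hz : z ∈ K) : dist (π z) z < r := (hπ z hz).trans_le (min_le_left _ _)
  have hmeas (q : SpaceTime N) : Measurable fun z ↦ q + π z := π.measurable.const_add q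
  refine ⟨fun q ↦ ∫ z, V (q + π z) ∂μ, ?_, fun q hq ↦ ?_, fun q hq ↦ ?_⟩
  · simp_rw [fun q ↦ integral_comp_simpleFunc (μ := μ) π fun y ↦ V (q + y)]
    fun_prop
  · rw [mem_closedBall_zero_iff] at hq
    rw [hWV]
    refine hVγ' _ _ (measurable_const_add q) (hmeas q) (fun z _ ↦ ?_)
      (fun z hz ↦ (dist_translate hq (hπr z hz)).le.trans hr₁) fun z hz ↦ ?_
    · rw [dist_add_self_left]; linarith
    · rw [dist_add_left]; exact (hπ z hz).trans_le (min_le_right _ _)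
  · rw [mem_ball_zero_iff] at hq
    have hπO (z : SpaceTime N) : q + π z ∈ O := by
      refine hthick (mem_cthickening_of_dist_le _ _ _ _ (hπK z) ?_)
      rw [dist_add_self_left]; linarith
    obtain ⟨ℓ, hgℓ, hℓ⟩ := exists_le_hasHeatAt_integral_simpleFunc (μ := μ) hVg π hπO
    have hclose := (abs_le.1 (hgγ id _ measurable_id (hmeas q) (by simp)
      (fun z hz ↦ (dist_translate hq.le (hπr z hz)).le.trans hr₁)
      fun z hz ↦ (dist_translate hq.le (hπr z hz)).trans_le hrγ)).1
    simp only [id] at hclose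
    exact ⟨ℓ, by linarith, hℓ⟩

lemma integral_withDensity_ofReal {φ : SpaceTime N → ℝ} (hφ : Continuous φ) (hφ₀ : 0 ≤ φ)
    (F : SpaceTime N → ℝ) :
    ∫ z, F z ∂volume.withDensity (fun z ↦ ENNReal.ofReal (φ z)) = ∫ z, F z * φ z := by
  rw [integral_withDensity_eq_integral_toReal_smul (by fun_prop) (by simp)]
  congr with z
  rw [ENNReal.toReal_ofReal (hφ₀ z), smul_eq_mul, mul_comm]

lemma integral_mul_le_integral_mul_heatOp {V g φ : SpaceTime N → ℝ} {O : Set (SpaceTime N)}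
    (hV : Continuous V) (hg : Continuous g) (hO : IsOpen O)
    (hVg : ∀ p ∈ O, ∃ ℓ ≥ g p, HasHeatAt V ℓ p) (hφ : ContDiff ℝ ∞ φ)
    (hφc : HasCompactSupport φ) (hφ₀ : 0 ≤ φ) (hφO : tsupport φ ⊆ O) :
    ∫ z, g z * φ z ≤ ∫ z, V z * heatOp (-1) φ z := by
  obtain hempty | hne := (tsupport φ).eq_empty_or_nonempty
  · simp [heatOp_eq_zero_of_notMem_tsupport, image_eq_zero_of_notMem_tsupport, hempty]
  let μ : Measure (SpaceTime N) := volume.withDensity fun z ↦ ENNReal.ofReal (φ z)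
  have : IsFiniteMeasure μ := isFiniteMeasure_withDensity_ofReal
    (hφ.continuous.integrable_of_hasCompactSupport hφc).2
  have hμ : ∀ᵐ z ∂μ, z ∈ tsupport φ := by
    rw [ae_withDensity_iff hφ.continuous.measurable.ennreal_ofReal]
    refine .of_forall fun z hz ↦ ?_
    contrapose! hz
    simp [image_eq_zero_of_notMem_tsupport hz]
  let ρ : SpaceTime N → ℝ := fun z ↦ φ (0 - z)
  have hρ : ContDiff ℝ ∞ ρ := by fun_prop
  have hρc : HasCompactSupport ρ := hφc.comp_homeomorph (Homeomorph.subLeft 0)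
  have hρφ : (fun z ↦ ρ (0 - z)) = φ := by simp [ρ]
  have hW (q : SpaceTime N) : convolve V ρ q = ∫ z, V (q + z) ∂μ := by
    rw [integral_withDensity_ofReal hφ.continuous hφ₀, convolve_eq_integral_sub,
      ← integral_neg_eq_self]
    simp [ρ]
  calc ∫ z, g z * φ z = ∫ z, g z ∂μ := (integral_withDensity_ofReal hφ.continuous hφ₀ g).symm
    _ ≤ heatOp 1 (convolve V ρ) 0 := integral_le_heatOp_of_hasHeatAt hV hg hO hVg hφc.isCompact
        hne hφO hμ (contDiff_convolve hV hρ hρc) hW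
    _ = ∫ z, V z * heatOp (-1) φ z := by rw [heatOp_convolve_eq_integral hV hρ hρc, hρφ]

section TimeCutoff

/-- A smooth cutoff in time, equal to `0` for `t ≤ 1 / (n + 1)` and to `1` for
`2 / (n + 1) ≤ t`. -/
def timeCutoff (n : ℕ) (t : ℝ) : ℝ := Real.smoothTransition ((n + 1) * t - 1)

variable {n : ℕ} {t : ℝ}

@[fun_prop]
lemma contDiff_timeCutoff (n : ℕ) : ContDiff ℝ ∞ (timeCutoff n) :=
  Real.smoothTransition.contDiff.comp (by fun_prop)

lemma timeCutoff_nonneg : 0 ≤ timeCutoff n t := Real.smoothTransition.nonneg _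

lemma timeCutoff_le_one : timeCutoff n t ≤ 1 := Real.smoothTransition.le_one _

lemma timeCutoff_eq_zero (ht : (n + 1) * t ≤ 1) : timeCutoff n t = 0 :=
  Real.smoothTransition.zero_of_nonpos (by linarith)

lemma timeCutoff_eq_one (ht : 2 ≤ (n + 1) * t) : timeCutoff n t = 1 :=
  Real.smoothTransition.one_of_one_le (by linarith)

lemma eventually_two_lt_add_one_mul (ht : 0 < t) : ∀ᶠ n : ℕ in atTop, 2 < ((n : ℝ) + 1) * t :=
  ((tendsto_natCast_atTop_atTop.atTop_add tendsto_const_nhds).atTop_mul_const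
    ht).eventually_gt_atTop 2

lemma deriv_timeCutoff_nonneg : 0 ≤ deriv (timeCutoff n) t :=
  (Real.smoothTransition.monotone.comp fun s t hst ↦ by gcongr :
    Monotone (timeCutoff n)).deriv_nonneg

lemma deriv_timeCutoff_eq_zero (ht : 2 < (n + 1) * t) : deriv (timeCutoff n) t = 0 := by
  have : timeCutoff n =ᶠ[𝓝 t] fun _ ↦ 1 := by
    filter_upwards [(show Continuous fun t : ℝ ↦ (n + 1) * t by fun_prop).continuousAt.eventually
      (lt_mem_nhds ht)] with s hs using timeCutoff_eq_one hs.le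
  rw [this.deriv_eq, deriv_const]

lemma heatOp_mul_comp_fst {φ : SpaceTime N → ℝ} {θ : ℝ → ℝ} (hφ : ContDiff ℝ ∞ φ)
    (hθ : ContDiff ℝ ∞ θ) (σ : ℝ) : heatOp σ (fun p ↦ φ p * θ p.1) p
      = heatOp σ φ p * θ p.1 + σ * (φ p * deriv θ p.1) := by
  have hθ' : dirDeriv timeDir (fun p : SpaceTime N ↦ θ p.1) p = deriv θ p.1 := by
    simp [dirDeriv_comp_fst (hθ.differentiable (by simp) p.1), timeDir]
  have hspace (i : Fin N) : dirDeriv (spaceDir i) (fun p : SpaceTime N ↦ θ p.1) = fun _ ↦ 0 :=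
    funext fun p ↦ dirDeriv_spaceDir_comp_fst hθ i
  rw [heatOp_mul hφ (by fun_prop)]
  simp only [heatOp, hθ', hspace, dirDeriv_const, Finset.sum_const_zero, mul_zero]
  ring

lemma tendsto_integral_mul_timeCutoff {G : SpaceTime N → ℝ} (hG : Integrable G)
    (hG₀ : ∀ p : SpaceTime N, p.1 ≤ 0 → G p = 0) :
    Tendsto (fun n ↦ ∫ p, G p * timeCutoff n p.1) atTop (𝓝 (∫ p, G p)) := by
  refine tendsto_integral_of_dominated_convergence (fun p ↦ ‖G p‖)
    (fun n ↦ hG.1.mul (by fun_prop : Continuous fun p : SpaceTime N ↦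
      timeCutoff n p.1).aestronglyMeasurable) hG.norm
    (fun n ↦ .of_forall fun p ↦ ?_) (.of_forall fun p ↦ ?_)
  · rw [norm_mul, Real.norm_of_nonneg timeCutoff_nonneg]
    exact mul_le_of_le_one_right (norm_nonneg _) timeCutoff_le_one
  · obtain hp | hp := le_or_gt p.1 0
    · simp [hG₀ p hp]
    · refine tendsto_const_nhds.congr' ?_
      filter_upwards [eventually_two_lt_add_one_mul hp] with n hn
      rw [timeCutoff_eq_one hn.le, mul_one]

lemma integral_mul_deriv_timeCutoff_le {φ : SpaceTime N → ℝ} (hφ : ContDiff ℝ ∞ φ)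
    (hφc : HasCompactSupport φ) (n : ℕ) :
    ∫ p, φ p * deriv (timeCutoff n) p.1 ≤ ∫ p, |dirDeriv timeDir φ p| := by
  have hθ : Continuous (deriv (timeCutoff n)) := (contDiff_timeCutoff n).continuous_deriv (by simp)
  have hi₁ : Integrable fun p ↦ φ p * deriv (timeCutoff n) p.1 :=
    (by fun_prop : Continuous _).integrable_of_hasCompactSupport hφc.mul_right
  have hi₂ : Integrable fun p ↦ dirDeriv timeDir φ p * timeCutoff n p.1 :=
    (by fun_prop : Continuous _).integrable_of_hasCompactSupport
      (hasCompactSupport_dirDeriv hφc _).mul_right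
  have hparts : ∫ p, φ p * deriv (timeCutoff n) p.1
      = -∫ p, dirDeriv timeDir φ p * timeCutoff n p.1 := by
    rw [eq_neg_iff_add_eq_zero, ← integral_add hi₁ hi₂,
      ← integral_dirDeriv_eq_zero (μ := volume) (g := fun p : SpaceTime N ↦ φ p * timeCutoff n p.1)
        (by fun_prop) hφc.mul_right timeDir]
    congr with p
    rw [dirDeriv_mul (by fun_prop) (by fun_prop),
      dirDeriv_comp_fst ((contDiff_timeCutoff n).differentiable (by simp) _)]
    simp [timeDir]
  rw [hparts, ← integral_neg]
  refine integral_mono hi₂.neg (integrable_dirDeriv hφ hφc _).abs fun p ↦ ?_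
  calc -(dirDeriv timeDir φ p * timeCutoff n p.1)
      = -dirDeriv timeDir φ p * timeCutoff n p.1 := (neg_mul _ _).symm
    _ ≤ |dirDeriv timeDir φ p| * timeCutoff n p.1 := by
        gcongr
        exacts [timeCutoff_nonneg, neg_le_abs _]
    _ ≤ |dirDeriv timeDir φ p| := mul_le_of_le_one_right (abs_nonneg _) timeCutoff_le_one

lemma exists_abs_le_of_fst_lt {V : SpaceTime N → ℝ} {K : Set (SpaceTime N)} (hV : Continuous V)
    (hV₀ : ∀ p : SpaceTime N, p.1 ≤ 0 → V p = 0) (hK : IsCompact K) {ε : ℝ} (hε : 0 < ε) :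
    ∃ γ > 0, ∀ p ∈ K, p.1 < γ → |V p| ≤ ε := by
  have hKε : IsCompact (K ∩ {p | ε ≤ |V p|}) :=
    hK.inter_right (isClosed_le continuous_const hV.abs)
  obtain hempty | hne := (K ∩ {p | ε ≤ |V p|}).eq_empty_or_nonempty
  · exact ⟨1, one_pos, fun p hp _ ↦ le_of_not_ge fun h ↦ (hempty ▸ ⟨hp, h⟩ : p ∈ (∅ : Set _))⟩
  obtain ⟨q, hq, hmin⟩ := hKε.exists_isMinOn hne continuous_fst.continuousOn
  have hq₀ : 0 < q.1 := by
    by_contra! h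
    have := hq.2
    simp only [mem_ofPred_eq, hV₀ q h, abs_zero] at this
    linarith
  exact ⟨q.1, hq₀, fun p hp hlt ↦ le_of_not_ge fun h ↦ (hmin ⟨hp, h⟩).not_gt hlt⟩

lemma tendsto_integral_mul_deriv_timeCutoff {V φ : SpaceTime N → ℝ} (hV : Continuous V)
    (hV₀ : ∀ p : SpaceTime N, p.1 ≤ 0 → V p = 0) (hφ : ContDiff ℝ ∞ φ)
    (hφc : HasCompactSupport φ) (hφ₀ : 0 ≤ φ) :
    Tendsto (fun n ↦ ∫ p, V p * (φ p * deriv (timeCutoff n) p.1)) atTop (𝓝 0) := by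
  set J := ∫ p, |dirDeriv timeDir φ p|
  have hJ₀ : 0 ≤ J := integral_nonneg fun p ↦ abs_nonneg _
  have bound (ε : ℝ) (hε : 0 < ε) :
      ∀ᶠ n in atTop, |∫ p, V p * (φ p * deriv (timeCutoff n) p.1)| ≤ ε * J := by
    obtain ⟨γ, hγ, hVγ⟩ := exists_abs_le_of_fst_lt hV hV₀ hφc.isCompact hε
    filter_upwards [eventually_two_lt_add_one_mul hγ] with n hn
    have hθ : Continuous (deriv (timeCutoff n)) :=
      (contDiff_timeCutoff n).continuous_deriv (by simp)
    have hi : Integrable fun p ↦ φ p * deriv (timeCutoff n) p.1 :=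
      (by fun_prop : Continuous _).integrable_of_hasCompactSupport hφc.mul_right
    rw [← Real.norm_eq_abs]
    refine (norm_integral_le_of_norm_le (hi.const_mul ε) (.of_forall fun p ↦ ?_)).trans ?_
    · have hw : 0 ≤ φ p * deriv (timeCutoff n) p.1 := mul_nonneg (hφ₀ p) deriv_timeCutoff_nonneg
      rw [norm_mul, Real.norm_of_nonneg hw]
      by_cases hp : p ∈ tsupport φ
      · obtain hlt | hle := lt_or_ge p.1 γ
        · exact mul_le_mul_of_nonneg_right (hVγ p hp hlt) hw
        · rw [deriv_timeCutoff_eq_zero (hn.trans_le (by gcongr))]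
          simp
      · simp [image_eq_zero_of_notMem_tsupport hp]
    · rw [integral_const_mul]
      gcongr
      exact integral_mul_deriv_timeCutoff_le hφ hφc n
  rw [Metric.tendsto_nhds]
  intro ε hε
  filter_upwards [bound (ε / (J + 1)) (by positivity)] with n hn
  rw [dist_zero_right, Real.norm_eq_abs]
  calc _ ≤ ε / (J + 1) * J := hn
    _ < ε / (J + 1) * (J + 1) := by gcongr; linarith
    _ = ε := by field_simp

lemma tsupport_mul_timeCutoff_subset (φ : SpaceTime N → ℝ) (n : ℕ) :
    tsupport (fun p ↦ φ p * timeCutoff n p.1) ⊆ tsupport φ ∩ {p | 0 < p.1} := by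
  refine subset_inter tsupport_mul_subset_left fun p hp ↦ ?_
  have hclosed : IsClosed {p : SpaceTime N | 1 ≤ (n + 1) * p.1} :=
    isClosed_le (by fun_prop) (by fun_prop)
  have hsupp : Function.support (fun p : SpaceTime N ↦ φ p * timeCutoff n p.1)
      ⊆ {p | 1 ≤ (n + 1) * p.1} := fun q hq ↦ by
    contrapose! hq
    simp only [mem_ofPred_eq, not_le] at hq
    simp [timeCutoff_eq_zero hq.le]
  have : 1 ≤ (n + 1) * p.1 := closure_minimal hsupp hclosed hp
  exact pos_of_mul_pos_right (one_pos.trans_le this) (by positivity)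

lemma integral_mul_le_integral_mul_heatOp_of_initial_zero {V g φ : SpaceTime N → ℝ}
    {O : Set (SpaceTime N)} (hV : Continuous V) (hg : Continuous g)
    (hV₀ : ∀ p : SpaceTime N, p.1 ≤ 0 → V p = 0) (hg₀ : ∀ p : SpaceTime N, p.1 ≤ 0 → g p = 0)
    (hO : IsOpen O) (hVg : ∀ p ∈ O, 0 < p.1 → ∃ ℓ ≥ g p, HasHeatAt V ℓ p)
    (hφ : ContDiff ℝ ∞ φ) (hφc : HasCompactSupport φ) (hφ₀ : 0 ≤ φ) (hφO : tsupport φ ⊆ O) :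
    ∫ z, g z * φ z ≤ ∫ z, V z * heatOp (-1) φ z := by
  have hcut (n : ℕ) : ∫ z, g z * φ z * timeCutoff n z.1
      ≤ (∫ z, V z * heatOp (-1) φ z * timeCutoff n z.1)
        - ∫ z, V z * (φ z * deriv (timeCutoff n) z.1) := by
    have hθ : Continuous (deriv (timeCutoff n)) :=
      (contDiff_timeCutoff n).continuous_deriv (by simp)
    have hi₁ : Integrable fun z ↦ V z * heatOp (-1) φ z * timeCutoff n z.1 :=
      (by fun_prop : Continuous _).integrable_of_hasCompactSupport
        (hasCompactSupport_heatOp hφc _).mul_left.mul_right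
    have hi₂ : Integrable fun z ↦ V z * (φ z * deriv (timeCutoff n) z.1) :=
      (by fun_prop : Continuous _).integrable_of_hasCompactSupport hφc.mul_right.mul_left
    have h := integral_mul_le_integral_mul_heatOp (φ := fun z ↦ φ z * timeCutoff n z.1) hV hg
      (hO.inter (isOpen_lt continuous_const continuous_fst)) (fun p hp ↦ hVg p hp.1 hp.2)
      (by fun_prop) hφc.mul_right (fun z ↦ mul_nonneg (hφ₀ z) timeCutoff_nonneg)
      ((tsupport_mul_timeCutoff_subset φ n).trans (inter_subset_inter_left _ hφO))
    simp only [heatOp_mul_comp_fst hφ (contDiff_timeCutoff n)] at h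
    rw [← integral_sub hi₁ hi₂]
    convert! h using 2 <;> ext z <;> ring
  have hlim := (tendsto_integral_mul_timeCutoff (G := fun z ↦ V z * heatOp (-1) φ z)
    ((by fun_prop : Continuous _).integrable_of_hasCompactSupport
      (hasCompactSupport_heatOp hφc _).mul_left) fun p hp ↦ by simp [hV₀ p hp]).sub
    (tendsto_integral_mul_deriv_timeCutoff hV hV₀ hφ hφc hφ₀)
  rw [sub_zero] at hlim
  exact le_of_tendsto_of_tendsto' (tendsto_integral_mul_timeCutoff (G := fun z ↦ g z * φ z)
    ((by fun_prop : Continuous _).integrable_of_hasCompactSupport hφc.mul_left)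
    fun p hp ↦ by simp [hg₀ p hp]) hlim hcut

end TimeCutoff

lemma abs_integral_mul_heatOp_le {V φ : SpaceTime N → ℝ} {O : Set (SpaceTime N)} {C : ℝ}
    (hV : Continuous V) (hV₀ : ∀ p : SpaceTime N, p.1 ≤ 0 → V p = 0) (hO : IsOpen O)
    (hVC : ∀ p ∈ O, 0 < p.1 → ∃ ℓ, HasHeatAt V ℓ p ∧ |ℓ| ≤ C * |V p|) (hφ : ContDiff ℝ ∞ φ)
    (hφc : HasCompactSupport φ) (hφ₀ : 0 ≤ φ) (hφO : tsupport φ ⊆ O) :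
    |∫ z, V z * heatOp (-1) φ z| ≤ C * ∫ z, |V z| * φ z := by
  have hlower (W : SpaceTime N → ℝ) (hW : Continuous W) (hWV : ∀ p, |W p| = |V p|)
      (hWC : ∀ p ∈ O, 0 < p.1 → ∃ ℓ ≥ -(C * |V p|), HasHeatAt W ℓ p) :
      -(C * ∫ z, |V z| * φ z) ≤ ∫ z, W z * heatOp (-1) φ z := by
    have h := integral_mul_le_integral_mul_heatOp_of_initial_zero (g := fun p ↦ -(C * |V p|)) hW
      (by fun_prop) (fun p hp ↦ by simpa [hV₀ p hp] using hWV p) (fun p hp ↦ by simp [hV₀ p hp])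
      hO hWC hφ hφc hφ₀ hφO
    simpa [neg_mul, integral_neg, mul_assoc, integral_const_mul] using h
  have hpos := hlower V hV (fun _ ↦ rfl) fun p hp hp₀ ↦ by
    obtain ⟨ℓ, hℓ, hle⟩ := hVC p hp hp₀
    exact ⟨ℓ, (abs_le.1 hle).1, hℓ⟩
  have hneg := hlower (fun p ↦ -1 * V p) (by fun_prop) (by simp) fun p hp hp₀ ↦ by
    obtain ⟨ℓ, hℓ, hle⟩ := hVC p hp hp₀
    exact ⟨-1 * ℓ, by linarith [(abs_le.1 hle).2], hℓ.const_mul (-1)⟩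
  simp only [neg_mul, one_mul, integral_neg] at hneg
  exact abs_le.2 ⟨hpos, by linarith⟩

/-! ### Mollification of the localized Carleman inequality -/

section Mollifier

variable {n : ℕ} {V : SpaceTime N → ℝ}

/-- The bump function underlying `mollifier`, supported in the ball of radius `1 / (n + 1)`. -/
def mollifierBump (N n : ℕ) : ContDiffBump (0 : SpaceTime N) where
  rIn := 1 / (2 * (n + 1))
  rOut := 1 / (n + 1)
  rIn_pos := by positivity
  rIn_lt_rOut := one_div_lt_one_div_of_lt (by positivity) (lt_two_mul_self (by positivity))

/-- A smooth approximate identity on space-time. -/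
def mollifier (N n : ℕ) : SpaceTime N → ℝ := (mollifierBump N n).normed volume

@[fun_prop]
lemma contDiff_mollifier : ContDiff ℝ ∞ (mollifier N n) := (mollifierBump N n).contDiff_normed

lemma hasCompactSupport_mollifier : HasCompactSupport (mollifier N n) :=
  (mollifierBump N n).hasCompactSupport_normed

lemma mollifier_nonneg (p : SpaceTime N) : 0 ≤ mollifier N n p :=
  (mollifierBump N n).nonneg_normed p

lemma integral_mollifier : ∫ p, mollifier N n p = 1 := (mollifierBump N n).integral_normed

lemma mollifier_eq_zero (hp : 1 / ((n : ℝ) + 1) ≤ ‖p‖) : mollifier N n p = 0 := by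
  rw [← Function.notMem_support, mollifier, (mollifierBump N n).support_normed_eq,
    mem_ball_zero_iff]
  exact hp.not_gt

lemma tsupport_mollifier_sub_subset (p : SpaceTime N) (n : ℕ) :
    tsupport (fun z ↦ mollifier N n (p - z)) ⊆ closedBall p (1 / ((n : ℝ) + 1)) := by
  refine closure_minimal (fun z hz ↦ ?_) isClosed_closedBall
  contrapose! hz
  rw [mem_closedBall, not_le, dist_comm, dist_eq_norm] at hz
  simp [mollifier_eq_zero hz.le]

lemma tendsto_convolve_mollifier (hV : Continuous V) (p : SpaceTime N) :
    Tendsto (fun n ↦ convolve V (mollifier N n) p) atTop (𝓝 (V p)) := by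
  refine (ContDiffBump.convolution_tendsto_right_of_continuous (μ := volume)
    (φ := mollifierBump N) (l := atTop) tendsto_one_div_add_atTop_nhds_zero_nat hV p).congr
    fun n ↦ ?_
  rw [convolve_eq_integral_sub, convolution_def]
  simp [mollifier, mul_comm]

lemma abs_convolve_mollifier_le {M : ℝ} (hM : ∀ q ∈ closedBall p 1, |V q| ≤ M) :
    |convolve V (mollifier N n) p| ≤ M := by
  have hi : Integrable (mollifier N n) :=
    contDiff_mollifier.continuous.integrable_of_hasCompactSupport hasCompactSupport_mollifier
  rw [convolve_eq_integral_sub]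
  calc |∫ z, V (p - z) * mollifier N n z| ≤ ∫ z, M * mollifier N n z := by
        rw [← Real.norm_eq_abs]
        refine norm_integral_le_of_norm_le (hi.const_mul M) (.of_forall fun z ↦ ?_)
        rw [norm_mul, Real.norm_of_nonneg (mollifier_nonneg z)]
        obtain hz | hz := le_or_gt (1 / ((n : ℝ) + 1)) ‖z‖
        · simp [mollifier_eq_zero hz]
        · refine mul_le_mul_of_nonneg_right (hM _ ?_) (mollifier_nonneg z)
          rw [mem_closedBall, dist_self_sub_left]
          exact hz.le.trans (div_le_one_of_le₀ (by simp) (by positivity))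
    _ = M := by rw [integral_const_mul, integral_mollifier, mul_one]

lemma tendsto_integral_mul_convolve_mollifier_sq {G : SpaceTime N → ℝ} (hV : Continuous V)
    (hG : Continuous G) (hGc : HasCompactSupport G) :
    Tendsto (fun n ↦ ∫ p, G p * convolve V (mollifier N n) p ^ 2) atTop
      (𝓝 (∫ p, G p * V p ^ 2)) := by
  obtain ⟨M, hM⟩ := (hGc.isCompact.cthickening (r := 1)).exists_bound_of_continuousOn
    hV.continuousOn
  refine tendsto_integral_of_dominated_convergence (fun p ↦ |G p| * M ^ 2) (fun n ↦ ?_)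
    ((hG.integrable_of_hasCompactSupport hGc).abs.mul_const _)
    (fun n ↦ .of_forall fun p ↦ ?_)
    (.of_forall fun p ↦ ((tendsto_convolve_mollifier hV p).pow 2).const_mul _)
  · have := (contDiff_convolve hV (contDiff_mollifier (n := n))
      hasCompactSupport_mollifier).continuous
    exact (by fun_prop : Continuous _).aestronglyMeasurable
  · rw [norm_mul, norm_pow, Real.norm_eq_abs, Real.norm_eq_abs]
    by_cases hp : p ∈ tsupport G
    · gcongr
      exact abs_convolve_mollifier_le fun q hq ↦ hM q (mem_cthickening_of_dist_le q p 1 _ hp hq)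
    · simp [image_eq_zero_of_notMem_tsupport hp]

lemma abs_convolve_le_convolve_abs (hV : Continuous V) (p : SpaceTime N) :
    |convolve V (mollifier N n) p| ≤ convolve (fun z ↦ |V z|) (mollifier N n) p := by
  rw [← Real.norm_eq_abs]
  refine norm_integral_le_of_norm_le (integrable_mul_comp_sub hV.abs
    contDiff_mollifier.continuous hasCompactSupport_mollifier p) (.of_forall fun z ↦ ?_)
  rw [norm_mul, Real.norm_of_nonneg (mollifier_nonneg _), Real.norm_eq_abs]

lemma abs_heatOp_convolve_mollifier_le {O : Set (SpaceTime N)} {C : ℝ} (hV : Continuous V)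
    (hV₀ : ∀ p : SpaceTime N, p.1 ≤ 0 → V p = 0) (hO : IsOpen O)
    (hVC : ∀ p ∈ O, 0 < p.1 → ∃ ℓ, HasHeatAt V ℓ p ∧ |ℓ| ≤ C * |V p|)
    (hpO : closedBall p (1 / ((n : ℝ) + 1)) ⊆ O) :
    |heatOp 1 (convolve V (mollifier N n)) p|
      ≤ C * convolve (fun z ↦ |V z|) (mollifier N n) p := by
  rw [heatOp_convolve_eq_integral hV contDiff_mollifier hasCompactSupport_mollifier]
  exact abs_integral_mul_heatOp_le hV hV₀ hO hVC (by fun_prop)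
    (hasCompactSupport_mollifier.comp_homeomorph (Homeomorph.subLeft p))
    (fun z ↦ mollifier_nonneg _) ((tsupport_mollifier_sub_subset p n).trans hpO)

lemma CarlemanWeight.localized_inequality_of_hasHeatAt {φ χ ψ : SpaceTime N → ℝ} {κ : ℝ → ℝ}
    {O : Set (SpaceTime N)} {C : ℝ} (hφ : CarlemanWeight φ κ) (hχψ : CutoffPair φ χ ψ)
    (hV : Continuous V) (hV₀ : ∀ p : SpaceTime N, p.1 ≤ 0 → V p = 0) (hO : IsOpen O)
    (hVC : ∀ p ∈ O, 0 < p.1 → ∃ ℓ, HasHeatAt V ℓ p ∧ |ℓ| ≤ C * |V p|)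
    (hχO : tsupport χ ⊆ O) (hψO : tsupport ψ ⊆ O) :
    ∫ p, carlemanGain φ κ p * (Real.exp (φ p) * χ p) ^ 2 * V p ^ 2
      ≤ ∫ p, (3 * C ^ 2 * (Real.exp (φ p) * χ p) ^ 2 + cutoffError φ χ ψ C p) * V p ^ 2 := by
  have hφs := hφ.contDiff
  have hκ := hφ.contDiff_curvature
  have hχ := hχψ.contDiff_inner
  have hcut := hχψ.continuous_cutoffError (C := C) hφs.continuous
  have hleft := tendsto_integral_mul_convolve_mollifier_sq hV
    (G := fun p ↦ carlemanGain φ κ p * (Real.exp (φ p) * χ p) ^ 2) (by fun_prop) <|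
    HasCompactSupport.intro hχψ.hasCompactSupport_inner fun p hp ↦ by
      simp [image_eq_zero_of_notMem_tsupport hp]
  have hright := tendsto_integral_mul_convolve_mollifier_sq hV.abs
    (G := fun p ↦ 3 * C ^ 2 * (Real.exp (φ p) * χ p) ^ 2 + cutoffError φ χ ψ C p)
    (by fun_prop) <| HasCompactSupport.intro hχψ.isCompact_union_tsupport fun p hp ↦ by
      simp [cutoffError_eq_zero_of_notMem hp,
        image_eq_zero_of_notMem_tsupport fun h ↦ hp (mem_union_left (tsupport ψ) h)]
  simp only [sq_abs] at hright
  obtain ⟨r, hr, hrO⟩ :=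
    hχψ.isCompact_union_tsupport.exists_cthickening_subset_open hO (union_subset hχO hψO)
  refine le_of_tendsto_of_tendsto hleft hright ?_
  filter_upwards [(tendsto_one_div_add_atTop_nhds_zero_nat (𝕜 := ℝ)).eventually
    (gt_mem_nhds hr)] with n hn
  have hmoll {W : SpaceTime N → ℝ} (hW : Continuous W) :=
    contDiff_convolve hW (contDiff_mollifier (n := n)) hasCompactSupport_mollifier
  refine hφ.localized_inequality hχψ (hmoll hV) (hmoll hV.abs).continuous
    (abs_convolve_le_convolve_abs hV) fun p hp ↦
      abs_heatOp_convolve_mollifier_le hV hV₀ hO hVC fun z hz ↦ hrO ?_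
  exact mem_cthickening_of_dist_le z p r _
    (hp.imp (fun h ↦ subset_tsupport _ h) fun h ↦ subset_tsupport _ h)
    ((mem_closedBall.1 hz).trans hn.le)

end Mollifier

/-! ### The weight and its level function -/

section Quadratic

variable {i₀ : Fin N} {A B D : ℝ → ℝ}

/-- The function `A(t) y_{i₀} + B(t) |y|² + D(t)`. -/
def quadratic (i₀ : Fin N) (A B D : ℝ → ℝ) (p : SpaceTime N) : ℝ :=
  A p.1 * p.2 i₀ + B p.1 * ‖p.2‖ ^ 2 + D p.1

@[fun_prop]
lemma contDiff_snd_apply (i : Fin N) : ContDiff ℝ ∞ fun p : SpaceTime N ↦ p.2 i :=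
  (EuclideanSpace.proj (𝕜 := ℝ) i).contDiff.comp contDiff_snd

@[fun_prop]
lemma contDiff_norm_snd_sq : ContDiff ℝ ∞ fun p : SpaceTime N ↦ ‖p.2‖ ^ 2 :=
  contDiff_snd.norm_sq ℝ

@[fun_prop]
lemma contDiff_quadratic (hA : ContDiff ℝ ∞ A) (hB : ContDiff ℝ ∞ B) (hD : ContDiff ℝ ∞ D) :
    ContDiff ℝ ∞ (quadratic i₀ A B D) := by
  unfold quadratic; fun_prop

lemma dirDeriv_snd_apply (v : SpaceTime N) (i : Fin N) :
    dirDeriv v (fun p : SpaceTime N ↦ p.2 i) p = v.2 i := by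
  let coord := (EuclideanSpace.proj (𝕜 := ℝ) i).comp (.snd ℝ ℝ (EuclideanSpace ℝ (Fin N)))
  change fderiv ℝ coord p v = v.2 i
  rw [coord.fderiv]
  rfl

lemma dirDeriv_norm_snd_sq (v : SpaceTime N) :
    dirDeriv v (fun p : SpaceTime N ↦ ‖p.2‖ ^ 2) p = 2 * inner ℝ p.2 v.2 := by
  have h : HasFDerivAt (fun p : SpaceTime N ↦ ‖p.2‖ ^ 2) _ p := hasFDerivAt_snd.norm_sq
  simp [dirDeriv, h.fderiv]

lemma dirDeriv_quadratic (hA : ContDiff ℝ ∞ A) (hB : ContDiff ℝ ∞ B) (hD : ContDiff ℝ ∞ D)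
    (v : SpaceTime N) : dirDeriv v (quadratic i₀ A B D) p
      = v.1 * quadratic i₀ (deriv A) (deriv B) (deriv D) p
        + A p.1 * v.2 i₀ + 2 * B p.1 * inner ℝ p.2 v.2 := by
  have hd {κ : ℝ → ℝ} (hκ : ContDiff ℝ ∞ κ) := dirDeriv_comp_fst (p := p)
    (hκ.differentiable (by simp) p.1)
  have hnorm : DifferentiableAt ℝ (fun p : SpaceTime N ↦ ‖p.2‖ ^ 2) p :=
    differentiableAt_of_contDiff_infty (by fun_prop)
  unfold quadratic
  simp (disch := fun_prop) only [dirDeriv_add, dirDeriv_mul, hd hA, hd hB, hd hD,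
    dirDeriv_snd_apply, dirDeriv_norm_snd_sq]
  ring

lemma dirDeriv_timeDir_quadratic {A' B' D' : ℝ → ℝ} (hA : ContDiff ℝ ∞ A) (hB : ContDiff ℝ ∞ B)
    (hD : ContDiff ℝ ∞ D) (hA' : ∀ t, HasDerivAt A (A' t) t) (hB' : ∀ t, HasDerivAt B (B' t) t)
    (hD' : ∀ t, HasDerivAt D (D' t) t) :
    dirDeriv timeDir (quadratic i₀ A B D) = quadratic i₀ A' B' D' := by
  ext p
  simp [dirDeriv_quadratic hA hB hD, timeDir, funext fun t ↦ (hA' t).deriv,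
    funext fun t ↦ (hB' t).deriv, funext fun t ↦ (hD' t).deriv]

lemma dirDeriv_spaceDir_quadratic (hA : ContDiff ℝ ∞ A) (hB : ContDiff ℝ ∞ B)
    (hD : ContDiff ℝ ∞ D) (j : Fin N) : dirDeriv (spaceDir j) (quadratic i₀ A B D)
      = fun p ↦ A p.1 * (if i₀ = j then 1 else 0) + 2 * B p.1 * p.2 j := by
  ext p
  simp [dirDeriv_quadratic hA hB hD, spaceDir, EuclideanSpace.inner_single_right]

lemma dirDeriv_spaceDir_spaceDir_quadratic (hA : ContDiff ℝ ∞ A) (hB : ContDiff ℝ ∞ B)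
    (hD : ContDiff ℝ ∞ D) (i j : Fin N) :
    dirDeriv (spaceDir i) (dirDeriv (spaceDir j) (quadratic i₀ A B D)) p
      = if i = j then 2 * B p.1 else 0 := by
  rw [dirDeriv_spaceDir_quadratic hA hB hD]
  simp (disch := fun_prop) only [dirDeriv_add, dirDeriv_mul,
    dirDeriv_spaceDir_comp_fst hA, dirDeriv_spaceDir_comp_fst hB, dirDeriv_const,
    dirDeriv_snd_apply]
  simp [spaceDir, eq_comm]

lemma sum_affine_mul_affine (i₀ : Fin N) (x : EuclideanSpace ℝ (Fin N)) (a b c d : ℝ) :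
    ∑ j, (a * (if i₀ = j then 1 else 0) + b * x j) * (c * (if i₀ = j then 1 else 0) + d * x j)
      = a * c + (a * d + b * c) * x i₀ + b * d * ‖x‖ ^ 2 := by
  have expand (j : Fin N) : (a * (if i₀ = j then 1 else 0) + b * x j)
      * (c * (if i₀ = j then 1 else 0) + d * x j)
      = (if i₀ = j then a * c + (a * d + b * c) * x j else 0) + b * d * x j ^ 2 := by
    split_ifs <;> ring
  simp only [expand, Finset.sum_add_distrib, EuclideanSpace.norm_sq_eq, ← Finset.mul_sum,
    Finset.sum_ite_eq, Finset.mem_univ, if_true, Real.norm_eq_abs, sq_abs]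

end Quadratic

/-- The parameters of the Carleman weight: the time span `T`, the growth rate `c`, the amplitude
`m` of the linear part, and the direction `i₀` normal to the boundary. -/
structure WeightParams (N : ℕ) where
  T : ℝ
  c : ℝ
  m : ℝ
  i₀ : Fin N
  T_pos : 0 < T
  c_pos : 0 < c
  m_pos : 0 < m
  mul_le_one : 256 * c * T ≤ 1

namespace WeightParams

variable (P : WeightParams N) {a t : ℝ}

/-- The coefficient of the linear part of the weight, vanishing to second order at `T`. -/
def slope (t : ℝ) : ℝ := P.m * (P.T - t) ^ 2 * (t + 8 * P.T)

/-- The derivative of `slope`. -/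
def slopeDeriv (t : ℝ) : ℝ := -3 * P.m * (P.T - t) * (5 * P.T + t)

/-- The coefficient of the concave part of the weight. -/
def curvature (t : ℝ) : ℝ := 4 * P.c - 64 * P.c ^ 2 * t

/-- The exponent `a G(t) y₁ - k(t) |y|²` of the Carleman weight, where `G` is `slope` and `k` is
`curvature`. -/
def weight (a : ℝ) : SpaceTime N → ℝ :=
  quadratic P.i₀ (fun t ↦ a * P.slope t) (fun t ↦ -P.curvature t) fun _ ↦ 0

/-- The function `G(t) y₁ - (c / a) |y|²` along whose level sets solutions are cut off. -/
def level (a : ℝ) : SpaceTime N → ℝ :=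
  quadratic P.i₀ P.slope (fun _ ↦ -(P.c / a)) fun _ ↦ 0

@[fun_prop]
lemma contDiff_slope : ContDiff ℝ ∞ P.slope := by unfold slope; fun_prop

@[fun_prop]
lemma contDiff_slopeDeriv : ContDiff ℝ ∞ P.slopeDeriv := by unfold slopeDeriv; fun_prop

@[fun_prop]
lemma contDiff_curvature : ContDiff ℝ ∞ P.curvature := by unfold curvature; fun_prop

@[fun_prop]
lemma contDiff_weight : ContDiff ℝ ∞ (P.weight a) := by unfold weight; fun_prop

@[fun_prop]
lemma contDiff_level : ContDiff ℝ ∞ (P.level a) := by unfold level; fun_prop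

lemma hasDerivAt_slope (t : ℝ) : HasDerivAt P.slope (P.slopeDeriv t) t := by
  convert! (((hasDerivAt_id t).const_sub P.T).pow 2).const_mul P.m |>.mul
    ((hasDerivAt_id t).add_const (8 * P.T)) using 1
  simp [slopeDeriv]; ring

lemma hasDerivAt_slopeDeriv (t : ℝ) :
    HasDerivAt P.slopeDeriv (P.m * (12 * P.T + 6 * t)) t := by
  convert! (((hasDerivAt_id t).const_sub P.T).const_mul (-3 * P.m)).mul
    ((hasDerivAt_id t).const_add (5 * P.T)) using 1
  simp; ring

lemma hasDerivAt_curvature (t : ℝ) : HasDerivAt P.curvature (-(64 * P.c ^ 2)) t := by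
  convert! ((hasDerivAt_id t).const_mul (64 * P.c ^ 2)).const_sub (4 * P.c) using 1
  simp

lemma dirDeriv_timeDir_weight : dirDeriv timeDir (P.weight a)
    = quadratic P.i₀ (fun t ↦ a * P.slopeDeriv t) (fun _ ↦ 64 * P.c ^ 2) fun _ ↦ 0 :=
  dirDeriv_timeDir_quadratic (by fun_prop) (by fun_prop) (by fun_prop)
    (fun t ↦ (P.hasDerivAt_slope t).const_mul a)
    (fun t ↦ by simpa using! (P.hasDerivAt_curvature t).neg) fun t ↦ hasDerivAt_const _ _

lemma dirDeriv_spaceDir_weight (j : Fin N) : dirDeriv (spaceDir j) (P.weight a)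
    = fun p ↦ a * P.slope p.1 * (if P.i₀ = j then 1 else 0) + 2 * -P.curvature p.1 * p.2 j :=
  dirDeriv_spaceDir_quadratic (by fun_prop) (by fun_prop) (by fun_prop) j

lemma carlemanWeight_weight : CarlemanWeight (P.weight a) P.curvature where
  contDiff := by fun_prop
  contDiff_curvature := by fun_prop
  hessian i j p := by
    rw [weight, dirDeriv_spaceDir_spaceDir_quadratic (by fun_prop) (by fun_prop) (by fun_prop)]
    simp

lemma dirDeriv_timeDir_level : dirDeriv timeDir (P.level a)
    = quadratic P.i₀ P.slopeDeriv (fun _ ↦ 0) fun _ ↦ 0 :=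
  dirDeriv_timeDir_quadratic (by fun_prop) (by fun_prop) (by fun_prop) P.hasDerivAt_slope
    (fun t ↦ hasDerivAt_const _ _) fun t ↦ hasDerivAt_const _ _

lemma dirDeriv_spaceDir_level (j : Fin N) : dirDeriv (spaceDir j) (P.level a)
    = fun p ↦ P.slope p.1 * (if P.i₀ = j then 1 else 0) + 2 * -(P.c / a) * p.2 j :=
  dirDeriv_spaceDir_quadratic (by fun_prop) (by fun_prop) (by fun_prop) j

lemma dirDeriv_spaceDir_spaceDir_level (j : Fin N) :
    dirDeriv (spaceDir j) (dirDeriv (spaceDir j) (P.level a)) p = 2 * -(P.c / a) := by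
  rw [level, dirDeriv_spaceDir_spaceDir_quadratic (by fun_prop) (by fun_prop) (by fun_prop)]
  simp

lemma carlemanPotential_weight : carlemanPotential (P.weight a)
    = quadratic P.i₀ (fun t ↦ -4 * a * (P.curvature t * P.slope t) - a * P.slopeDeriv t)
        (fun t ↦ 4 * (P.curvature t * P.curvature t) - 64 * P.c ^ 2)
        fun t ↦ a ^ 2 * (P.slope t * P.slope t) := by
  ext p
  simp only [carlemanPotential, P.dirDeriv_timeDir_weight, P.dirDeriv_spaceDir_weight, pow_two,
    sum_affine_mul_affine, quadratic]
  ring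

lemma dirDeriv_timeDir_carlemanPotential_weight :
    dirDeriv timeDir (carlemanPotential (P.weight a)) = quadratic P.i₀
      (fun t ↦ -4 * a * (-(64 * P.c ^ 2) * P.slope t + P.curvature t * P.slopeDeriv t)
        - a * (P.m * (12 * P.T + 6 * t)))
      (fun t ↦ 4 * (-(64 * P.c ^ 2) * P.curvature t + P.curvature t * -(64 * P.c ^ 2)))
      fun t ↦ a ^ 2 * (P.slopeDeriv t * P.slope t + P.slope t * P.slopeDeriv t) := by
  rw [carlemanPotential_weight]
  have hk := P.hasDerivAt_curvature
  have hG := P.hasDerivAt_slope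
  exact dirDeriv_timeDir_quadratic (by fun_prop) (by fun_prop) (by fun_prop)
    (fun t ↦ (((hk t).mul (hG t)).const_mul _).sub ((P.hasDerivAt_slopeDeriv t).const_mul a))
    (fun t ↦ (((hk t).mul (hk t)).const_mul 4).sub_const _)
    fun t ↦ ((hG t).mul (hG t)).const_mul _

lemma carlemanGain_weight (p : SpaceTime N) : carlemanGain (P.weight a) P.curvature p
    = 4 * a ^ 2 * P.slope p.1 * (-P.slopeDeriv p.1 - 4 * P.curvature p.1 * P.slope p.1)
      + a * p.2 P.i₀ * (P.m * (12 * P.T + 6 * p.1) + 16 * P.curvature p.1 * P.slopeDeriv p.1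
        + (64 * P.curvature p.1 ^ 2 - 512 * P.c ^ 2) * P.slope p.1)
      + P.curvature p.1 * (1536 * P.c ^ 2 - 64 * P.curvature p.1 ^ 2) * ‖p.2‖ ^ 2
      - 16 * P.curvature p.1 ^ 2 := by
  have hx (j : Fin N) : dirDeriv (spaceDir j) (carlemanPotential (P.weight a)) = fun p ↦
      (-4 * a * (P.curvature p.1 * P.slope p.1) - a * P.slopeDeriv p.1)
        * (if P.i₀ = j then 1 else 0)
      + 2 * (4 * (P.curvature p.1 * P.curvature p.1) - 64 * P.c ^ 2) * p.2 j := by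
    rw [carlemanPotential_weight]
    exact dirDeriv_spaceDir_quadratic (by fun_prop) (by fun_prop) (by fun_prop) j
  simp only [carlemanGain, dirDeriv_timeDir_carlemanPotential_weight, hx,
    dirDeriv_spaceDir_weight, sum_affine_mul_affine]
  simp only [carlemanPotential_weight, quadratic]
  ring

lemma curvature_le (ht : 0 ≤ t) : P.curvature t ≤ 4 * P.c := by
  unfold curvature; nlinarith [mul_nonneg (sq_nonneg P.c) ht]

lemma le_curvature (ht : t ≤ P.T) : 15 / 4 * P.c ≤ P.curvature t := by
  have := P.c_pos
  have : 256 * P.c * t ≤ 1 := le_trans (by gcongr) P.mul_le_one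
  unfold curvature; nlinarith

lemma slope_nonneg (ht : -(8 * P.T) ≤ t) : 0 ≤ P.slope t :=
  mul_nonneg (mul_nonneg P.m_pos.le (sq_nonneg _)) (by linarith)

lemma le_neg_slopeDeriv (h0 : 0 ≤ t) (hT : t ≤ P.T) :
    4 * P.curvature t * P.slope t ≤ -P.slopeDeriv t := by
  have := P.c_pos
  have := P.T_pos
  have hquad : P.curvature t * ((P.T - t) * (t + 8 * P.T)) ≤ 4 * P.c * (8 * P.T ^ 2) :=
    mul_le_mul (P.curvature_le h0) (by nlinarith) (mul_nonneg (by linarith) (by linarith))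
      (by positivity)
  have hbracket : 0 ≤ 3 * (5 * P.T + t) - 4 * (P.curvature t * ((P.T - t) * (t + 8 * P.T))) := by
    nlinarith [P.mul_le_one]
  unfold slope slopeDeriv
  nlinarith [mul_nonneg (mul_nonneg P.m_pos.le (sub_nonneg.2 hT)) hbracket]

lemma le_linear_coefficient (h0 : 0 ≤ t) (hT : t ≤ P.T) :
    7 * P.T * P.m ≤ P.m * (12 * P.T + 6 * t) + 16 * P.curvature t * P.slopeDeriv t
      + (64 * P.curvature t ^ 2 - 512 * P.c ^ 2) * P.slope t := by
  have := P.c_pos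
  have := P.T_pos
  have hk := P.le_curvature hT
  have hslope : 0 ≤ (64 * P.curvature t ^ 2 - 512 * P.c ^ 2) * P.slope t :=
    mul_nonneg (by nlinarith) (P.slope_nonneg (by linarith))
  have hquad : P.curvature t * ((P.T - t) * (5 * P.T + t)) ≤ 4 * P.c * (5 * P.T ^ 2) :=
    mul_le_mul (P.curvature_le h0) (by nlinarith) (mul_nonneg (by linarith) (by linarith))
      (by positivity)
  have hbracket : 0 ≤ 12 * P.T + 6 * t - 48 * (P.curvature t * ((P.T - t) * (5 * P.T + t)))
      - 7 * P.T := by nlinarith [P.mul_le_one]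
  unfold slopeDeriv
  nlinarith [mul_nonneg P.m_pos.le hbracket]

lemma le_carlemanGain_weight (ha : 0 ≤ a) (h0 : 0 ≤ p.1) (hT : p.1 ≤ P.T)
    (hp : 0 ≤ p.2 P.i₀) :
    7 * P.T * P.m * a * p.2 P.i₀ - 256 * P.c ^ 2 ≤ carlemanGain (P.weight a) P.curvature p := by
  have := P.c_pos
  have := P.T_pos
  have hk_le := P.curvature_le h0
  have hk_ge := P.le_curvature hT
  have hquad : 0 ≤ 4 * a ^ 2 * P.slope p.1
      * (-P.slopeDeriv p.1 - 4 * P.curvature p.1 * P.slope p.1) :=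
    mul_nonneg (mul_nonneg (by positivity) (P.slope_nonneg (by linarith)))
      (sub_nonneg.2 (P.le_neg_slopeDeriv h0 hT))
  have hlin := mul_le_mul_of_nonneg_left (P.le_linear_coefficient h0 hT) (mul_nonneg ha hp)
  have hnorm : 0 ≤ P.curvature p.1 * (1536 * P.c ^ 2 - 64 * P.curvature p.1 ^ 2) * ‖p.2‖ ^ 2 :=
    mul_nonneg (mul_nonneg (by linarith) (by nlinarith)) (sq_nonneg _)
  have hconst : P.curvature p.1 ^ 2 ≤ 16 * P.c ^ 2 := by nlinarith
  rw [carlemanGain_weight]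
  linarith

end WeightParams

/-! ### Cut-offs along level sets -/

section IndicatorComp

variable {X : Type*} [TopologicalSpace X] {Ω : Set X} {Θ : X → ℝ} {η : ℝ → ℝ}

lemma indicator_comp_eventuallyEq_zero {p : X} (hΘ : Continuous Θ)
    (hη : ∀ p ∈ frontier Ω, Θ p ∉ tsupport η) (hp : p ∉ Ω) :
    Ω.indicator (η ∘ Θ) =ᶠ[𝓝 p] fun _ ↦ 0 := by
  by_cases hpΩ : p ∈ closure Ω
  · have hp' : Θ p ∉ tsupport η := hη p ⟨hpΩ, fun h ↦ hp (interior_subset h)⟩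
    filter_upwards [hΘ.continuousAt.eventually ((isClosed_tsupport η).isOpen_compl.mem_nhds hp')]
      with q hq
    simp [indicator, image_eq_zero_of_notMem_tsupport hq]
  · filter_upwards [isClosed_closure.isOpen_compl.mem_nhds hpΩ] with q hq
    exact indicator_of_notMem (fun h ↦ hq (subset_closure h)) _

lemma indicator_comp_eventuallyEq_comp {p : X} (hΩ : IsOpen Ω) (hp : p ∈ Ω) :
    Ω.indicator (η ∘ Θ) =ᶠ[𝓝 p] η ∘ Θ := by
  filter_upwards [hΩ.mem_nhds hp] with q hq using indicator_of_mem hq _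

lemma tsupport_indicator_comp_subset (hΘ : Continuous Θ) :
    tsupport (Ω.indicator (η ∘ Θ)) ⊆ closure Ω ∩ Θ ⁻¹' tsupport η := by
  refine closure_minimal (fun p hp ↦ ?_)
    (isClosed_closure.inter ((isClosed_tsupport η).preimage hΘ))
  rw [Function.mem_support, indicator_apply_ne_zero] at hp
  exact ⟨subset_closure hp.1, subset_closure hp.2⟩

variable {E : Type*} [NormedAddCommGroup E] [NormedSpace ℝ E] {Ω : Set E} {Θ : E → ℝ}

lemma contDiff_indicator_comp (hΩ : IsOpen Ω) (hΘ : ContDiff ℝ ∞ Θ) (hη : ContDiff ℝ ∞ η)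
    (hηΩ : ∀ p ∈ frontier Ω, Θ p ∉ tsupport η) : ContDiff ℝ ∞ (Ω.indicator (η ∘ Θ)) := by
  refine contDiff_iff_contDiffAt.2 fun p ↦ ?_
  by_cases hp : p ∈ Ω
  · exact (hη.comp hΘ).contDiffAt.congr_of_eventuallyEq (indicator_comp_eventuallyEq_comp hΩ hp)
  · exact contDiffAt_const.congr_of_eventuallyEq
      (indicator_comp_eventuallyEq_zero hΘ.continuous hηΩ hp)

lemma dirDeriv_indicator_comp (hΩ : IsOpen Ω) (hΘ : ContDiff ℝ ∞ Θ) (hη : ContDiff ℝ ∞ η)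
    (hηΩ : ∀ p ∈ frontier Ω, Θ p ∉ tsupport η) (v : E) :
    dirDeriv v (Ω.indicator (η ∘ Θ))
      = fun p ↦ Ω.indicator (deriv η ∘ Θ) p * dirDeriv v Θ p := by
  ext p
  unfold dirDeriv
  by_cases hp : p ∈ Ω
  · have hcomp := (hη.differentiable (by simp) (Θ p)).hasDerivAt.comp_hasFDerivAt p
      (hΘ.differentiable (by simp) p).hasFDerivAt
    simp [(indicator_comp_eventuallyEq_comp hΩ hp).fderiv_eq, hcomp.fderiv, hp]
  · simp [(indicator_comp_eventuallyEq_zero hΘ.continuous hηΩ hp).fderiv_eq, hp]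

end IndicatorComp

lemma heatOp_indicator_comp {Ω : Set (SpaceTime N)} {Θ : SpaceTime N → ℝ} {η : ℝ → ℝ}
    (hΩ : IsOpen Ω) (hΘ : ContDiff ℝ ∞ Θ) (hη : ContDiff ℝ ∞ η)
    (hηΩ : ∀ p ∈ frontier Ω, Θ p ∉ tsupport η) (σ : ℝ) :
    heatOp σ (Ω.indicator (η ∘ Θ)) p = Ω.indicator (deriv η ∘ Θ) p * heatOp σ Θ p
      + Ω.indicator (deriv (deriv η) ∘ Θ) p * ∑ i, dirDeriv (spaceDir i) Θ p ^ 2 := by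
  have hη' : ContDiff ℝ ∞ (deriv η) := (contDiff_infty_iff_deriv.1 hη).2
  have hη'Ω : ∀ p ∈ frontier Ω, Θ p ∉ tsupport (deriv η) :=
    fun p hp h ↦ hηΩ p hp (tsupport_deriv_subset h)
  have hsmooth := contDiff_indicator_comp hΩ hΘ hη' hη'Ω
  unfold heatOp
  simp_rw [dirDeriv_indicator_comp hΩ hΘ hη hηΩ]
  simp (disch := fun_prop) only [dirDeriv_mul, dirDeriv_indicator_comp hΩ hΘ hη' hη'Ω,
    Finset.sum_add_distrib, ← Finset.mul_sum, mul_assoc, ← pow_two]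
  ring

lemma heatOp_exp_mul (hf : ContDiff ℝ ∞ f) (hg : ContDiff ℝ ∞ g) (σ : ℝ) :
    heatOp σ (fun p ↦ Real.exp (f p) * g p) p = Real.exp (f p) * (heatOp σ g p
      + (heatOp σ f p + ∑ i, dirDeriv (spaceDir i) f p ^ 2) * g p
      + 2 * ∑ i, dirDeriv (spaceDir i) f p * dirDeriv (spaceDir i) g p) := by
  have hexp (v : SpaceTime N) : dirDeriv v (fun p ↦ Real.exp (f p))
      = fun p ↦ Real.exp (f p) * dirDeriv v f p :=
    funext fun p ↦ dirDeriv_exp (by fun_prop) v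
  have hheat : heatOp σ (fun p ↦ Real.exp (f p)) p
      = Real.exp (f p) * (heatOp σ f p + ∑ i, dirDeriv (spaceDir i) f p ^ 2) := by
    unfold heatOp
    simp (disch := fun_prop) only [hexp, dirDeriv_mul, Finset.sum_add_distrib, mul_assoc,
      ← Finset.mul_sum, ← pow_two]
    ring
  rw [heatOp_mul (by fun_prop) hg, hheat]
  simp only [hexp, mul_assoc, ← Finset.mul_sum]
  ring

namespace WeightParams

variable (P : WeightParams N) {a : ℝ} {η : ℝ → ℝ}

/-- The time slab `(-8T, T)`, at whose ends `slope` vanishes. -/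
def slab : Set (SpaceTime N) := Prod.fst ⁻¹' Ioo (-(8 * P.T)) P.T

/-- The function `η ∘ level a` cut off to the time slab. -/
def cutoff (a : ℝ) (η : ℝ → ℝ) : SpaceTime N → ℝ := P.slab.indicator (η ∘ P.level a)

/-- The part of the closed time slab where `level a ≥ 3/4`. -/
def superlevel (a : ℝ) : Set (SpaceTime N) :=
  {p | p.1 ∈ Icc (-(8 * P.T)) P.T ∧ 3 / 4 ≤ P.level a p}

/-- A compact set containing `superlevel a`, see `superlevel_subset_box`. -/
def box (a : ℝ) : Set (SpaceTime N) :=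
  Icc (-(8 * P.T)) P.T ×ˢ closedBall 0 (729 * P.m * P.T ^ 3 / P.c * a)

lemma isOpen_slab : IsOpen P.slab := isOpen_Ioo.preimage continuous_fst

lemma isCompact_box : IsCompact (P.box a) := isCompact_Icc.prod (isCompact_closedBall _ _)

lemma closure_slab_subset : closure P.slab ⊆ Prod.fst ⁻¹' Icc (-(8 * P.T)) P.T :=
  closure_minimal (preimage_mono Ioo_subset_Icc_self) (isClosed_Icc.preimage continuous_fst)

lemma level_eq (p : SpaceTime N) :
    P.level a p = P.slope p.1 * p.2 P.i₀ - P.c / a * ‖p.2‖ ^ 2 := by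
  simp only [level, quadratic]; ring

lemma level_nonpos_of_mem_frontier (ha : 0 < a) (hp : p ∈ frontier P.slab) : P.level a p ≤ 0 := by
  have := P.c_pos
  have hslope : P.slope p.1 = 0 := by
    have hp := continuous_fst.frontier_preimage_subset _ hp
    rw [mem_preimage, frontier_Ioo (by linarith [P.T_pos])] at hp
    rcases hp with hp | (hp : p.1 = P.T) <;> simp [slope, hp]
  rw [level_eq, hslope, zero_mul, zero_sub, neg_nonpos]
  positivity

lemma slope_le (h : -(8 * P.T) ≤ t) (hT : t ≤ P.T) : P.slope t ≤ 729 * P.m * P.T ^ 3 := by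
  have := P.T_pos
  have := P.m_pos
  have hT_sub : (P.T - t) ^ 2 ≤ 81 * P.T ^ 2 := by nlinarith
  calc P.slope t ≤ P.m * (81 * P.T ^ 2) * (9 * P.T) :=
        mul_le_mul (by gcongr) (by linarith) (by linarith) (by positivity)
    _ = 729 * P.m * P.T ^ 3 := by ring

variable {P}

lemma level_le (ha : 0 < a) (p : SpaceTime N) :
    P.level a p ≤ P.slope p.1 * p.2 P.i₀ := by
  have := P.c_pos
  rw [level_eq, sub_le_self_iff]
  positivity

lemma normal_pos_of_mem_superlevel (ha : 0 < a) (hp : p ∈ P.superlevel a) : 0 < p.2 P.i₀ :=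
  pos_of_mul_pos_right ((by linarith [hp.2] : 0 < P.level a p).trans_le (level_le ha p))
    (P.slope_nonneg hp.1.1)

lemma lt_of_mem_superlevel (ha : 0 < a) (hp : p ∈ P.superlevel a) : p.1 < P.T := by
  refine hp.1.2.lt_of_ne fun h ↦ ?_
  have := hp.2.trans (level_le ha p)
  norm_num [slope, h] at this

lemma level_le_mul_normal (ha : 0 < a) (hp : p ∈ P.superlevel a) :
    P.level a p ≤ 729 * P.m * P.T ^ 3 * p.2 P.i₀ :=
  (level_le ha p).trans <| mul_le_mul_of_nonneg_right (P.slope_le hp.1.1 hp.1.2)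
    (normal_pos_of_mem_superlevel ha hp).le

lemma superlevel_subset_box (ha : 0 < a) : P.superlevel a ⊆ P.box a := by
  refine fun p hp ↦ ⟨hp.1, mem_closedBall_zero_iff.2 ?_⟩
  have := P.c_pos
  have hpos := normal_pos_of_mem_superlevel ha hp
  have hnormal : p.2 P.i₀ ≤ ‖p.2‖ := (le_abs_self _).trans (PiLp.norm_apply_le p.2 P.i₀)
  have hslope := P.slope_le hp.1.1 hp.1.2
  have hsq : P.c / a * ‖p.2‖ * ‖p.2‖ ≤ 729 * P.m * P.T ^ 3 * ‖p.2‖ :=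
    calc P.c / a * ‖p.2‖ * ‖p.2‖ ≤ P.slope p.1 * p.2 P.i₀ := by
          have := hp.2; rw [level_eq] at this; linarith
      _ ≤ 729 * P.m * P.T ^ 3 * ‖p.2‖ :=
        mul_le_mul hslope hnormal hpos.le ((P.slope_nonneg hp.1.1).trans hslope)
  have hbound := le_of_mul_le_mul_right hsq (hpos.trans_le hnormal)
  rw [div_mul_eq_mul_div, div_le_iff₀ ha] at hbound
  rw [div_mul_eq_mul_div, le_div_iff₀ P.c_pos]
  linarith

lemma level_notMem_tsupport (ha : 0 < a) (hη : tsupport η ⊆ Ici (3 / 4))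
    (hp : p ∈ frontier P.slab) : P.level a p ∉ tsupport η := fun h ↦ by
  linarith [mem_Ici.1 (hη h), P.level_nonpos_of_mem_frontier ha hp]

lemma contDiff_cutoff (ha : 0 < a) (hη : ContDiff ℝ ∞ η) (hηs : tsupport η ⊆ Ici (3 / 4)) :
    ContDiff ℝ ∞ (P.cutoff a η) :=
  contDiff_indicator_comp P.isOpen_slab (by fun_prop) hη fun _ ↦ level_notMem_tsupport ha hηs

lemma dirDeriv_cutoff (ha : 0 < a) (hη : ContDiff ℝ ∞ η) (hηs : tsupport η ⊆ Ici (3 / 4))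
    (v : SpaceTime N) : dirDeriv v (P.cutoff a η)
      = fun p ↦ P.cutoff a (deriv η) p * dirDeriv v (P.level a) p :=
  dirDeriv_indicator_comp P.isOpen_slab (by fun_prop) hη
    (fun _ ↦ level_notMem_tsupport ha hηs) v

lemma heatOp_cutoff (ha : 0 < a) (hη : ContDiff ℝ ∞ η) (hηs : tsupport η ⊆ Ici (3 / 4))
    (σ : ℝ) : heatOp σ (P.cutoff a η) p = P.cutoff a (deriv η) p * heatOp σ (P.level a) p
      + P.cutoff a (deriv (deriv η)) p * ∑ i, dirDeriv (spaceDir i) (P.level a) p ^ 2 :=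
  heatOp_indicator_comp P.isOpen_slab (by fun_prop) hη (fun _ ↦ level_notMem_tsupport ha hηs) σ

lemma tsupport_cutoff_subset (hηs : tsupport η ⊆ Ici (3 / 4)) :
    tsupport (P.cutoff a η) ⊆ P.superlevel a := fun _ hp ↦
  have h := tsupport_indicator_comp_subset (P.contDiff_level (a := a)).continuous hp
  ⟨P.closure_slab_subset h.1, hηs h.2⟩

lemma hasCompactSupport_cutoff (ha : 0 < a) (hηs : tsupport η ⊆ Ici (3 / 4)) :
    HasCompactSupport (P.cutoff a η) :=
  P.isCompact_box.of_isClosed_subset (isClosed_tsupport _)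
    ((tsupport_cutoff_subset hηs).trans (superlevel_subset_box ha))

lemma level_mem_tsupport_of_cutoff_ne_zero (h : P.cutoff a η p ≠ 0) :
    P.level a p ∈ tsupport η :=
  subset_closure (indicator_apply_ne_zero.1 h).2

end WeightParams

/-! ### Polynomial growth in the weight parameter -/

section PolynomialGrowth

/-- `F a` is bounded on `K a` by a fixed polynomial in `a ≥ 1`. -/
def PolynomialGrowth {X : Type*} (K : ℝ → Set X) (F : ℝ → X → ℝ) : Prop :=
  ∃ M : ℝ, 0 ≤ M ∧ ∃ n : ℕ, ∀ a, 1 ≤ a → ∀ p ∈ K a, |F a p| ≤ M * a ^ n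

namespace PolynomialGrowth

variable {X : Type*} {K : ℝ → Set X} {F G : ℝ → X → ℝ}

lemma of_abs_le_const {M : ℝ} (h : ∀ a, 1 ≤ a → ∀ p ∈ K a, |F a p| ≤ M) :
    PolynomialGrowth K F :=
  ⟨|M|, abs_nonneg _, 0, fun a ha p hp ↦ by simpa using (h a ha p hp).trans (le_abs_self M)⟩

lemma mono (hG : PolynomialGrowth K G) (h : ∀ a, 1 ≤ a → ∀ p ∈ K a, |F a p| ≤ |G a p|) :
    PolynomialGrowth K F :=
  let ⟨M, hM, n, hbound⟩ := hG
  ⟨M, hM, n, fun a ha p hp ↦ (h a ha p hp).trans (hbound a ha p hp)⟩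

lemma congr (hG : PolynomialGrowth K G) (h : ∀ a, 1 ≤ a → ∀ p ∈ K a, F a p = G a p) :
    PolynomialGrowth K F :=
  hG.mono fun a ha p hp ↦ by rw [h a ha p hp]

lemma const (c : ℝ) : PolynomialGrowth K fun _ _ ↦ c := of_abs_le_const fun _ _ _ _ ↦ le_rfl

lemma param_pow (n : ℕ) : PolynomialGrowth K fun a _ ↦ a ^ n :=
  ⟨1, zero_le_one, n, fun a ha _ _ ↦ by rw [abs_of_nonneg (by positivity), one_mul]⟩

lemma mul (hF : PolynomialGrowth K F) (hG : PolynomialGrowth K G) :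
    PolynomialGrowth K fun a p ↦ F a p * G a p := by
  obtain ⟨M, hM, n, hF⟩ := hF
  obtain ⟨M', hM', n', hG⟩ := hG
  refine ⟨M * M', by positivity, n + n', fun a ha p hp ↦ ?_⟩
  calc |F a p * G a p| = |F a p| * |G a p| := abs_mul _ _
    _ ≤ (M * a ^ n) * (M' * a ^ n') := by gcongr; exacts [hF a ha p hp, hG a ha p hp]
    _ = M * M' * a ^ (n + n') := by rw [pow_add]; ring

lemma add (hF : PolynomialGrowth K F) (hG : PolynomialGrowth K G) :
    PolynomialGrowth K fun a p ↦ F a p + G a p := by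
  obtain ⟨M, hM, n, hF⟩ := hF
  obtain ⟨M', hM', n', hG⟩ := hG
  refine ⟨M + M', by positivity, n + n', fun a ha p hp ↦ ?_⟩
  calc |F a p + G a p| ≤ |F a p| + |G a p| := abs_add_le _ _
    _ ≤ M * a ^ n + M' * a ^ n' := add_le_add (hF a ha p hp) (hG a ha p hp)
    _ ≤ M * a ^ (n + n') + M' * a ^ (n + n') := by gcongr <;> omega
    _ = (M + M') * a ^ (n + n') := by ring

lemma const_mul (c : ℝ) (hF : PolynomialGrowth K F) : PolynomialGrowth K fun a p ↦ c * F a p :=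
  (const c).mul hF

lemma sq (hF : PolynomialGrowth K F) : PolynomialGrowth K fun a p ↦ F a p ^ 2 :=
  (hF.mul hF).congr fun _ _ _ _ ↦ pow_two _

lemma abs (hF : PolynomialGrowth K F) : PolynomialGrowth K fun a p ↦ |F a p| :=
  hF.mono fun _ _ _ _ ↦ (abs_abs _).le

lemma sum {ι : Type*} (s : Finset ι) {F : ι → ℝ → X → ℝ} (hF : ∀ i, PolynomialGrowth K (F i)) :
    PolynomialGrowth K fun a p ↦ ∑ i ∈ s, F i a p := by
  classical
  induction s using Finset.induction_on with
  | empty => simpa using const 0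
  | insert i s hi ih => simpa only [Finset.sum_insert hi] using (hF i).add ih

end PolynomialGrowth

end PolynomialGrowth

namespace WeightParams

open PolynomialGrowth

variable (P : WeightParams N) {η : ℝ → ℝ}

lemma polynomialGrowth_time {A : ℝ → ℝ} (hA : Continuous A) :
    PolynomialGrowth P.box fun _ p ↦ A p.1 :=
  let ⟨_, hM⟩ := isCompact_Icc.bddAbove_image hA.abs.continuousOn
  .of_abs_le_const fun _ _ p hp ↦ hM ⟨p.1, hp.1, rfl⟩

lemma polynomialGrowth_norm : PolynomialGrowth P.box fun _ p ↦ ‖p.2‖ := by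
  have := P.T_pos
  have := P.c_pos
  have := P.m_pos
  refine ⟨729 * P.m * P.T ^ 3 / P.c, by positivity, 1, fun a _ p hp ↦ ?_⟩
  simpa using mem_closedBall_zero_iff.1 hp.2

lemma polynomialGrowth_apply (i : Fin N) : PolynomialGrowth P.box fun _ p ↦ p.2 i :=
  P.polynomialGrowth_norm.mono fun _ _ p _ ↦ by simpa using PiLp.norm_apply_le p.2 i

lemma polynomialGrowth_quadratic {A B D : ℝ → ℝ → ℝ}
    (hA : PolynomialGrowth P.box fun a p ↦ A a p.1)
    (hB : PolynomialGrowth P.box fun a p ↦ B a p.1)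
    (hD : PolynomialGrowth P.box fun a p ↦ D a p.1) :
    PolynomialGrowth P.box fun a ↦ quadratic P.i₀ (A a) (B a) (D a) :=
  ((hA.mul (P.polynomialGrowth_apply _)).add (hB.mul P.polynomialGrowth_norm.sq)).add hD

lemma polynomialGrowth_param : PolynomialGrowth P.box fun a _ ↦ a := by
  simpa using param_pow (K := P.box) 1

lemma polynomialGrowth_div_param (c : ℝ) : PolynomialGrowth P.box fun a _ ↦ -(c / a) :=
  .of_abs_le_const (M := |c|) fun a ha _ _ ↦ by
    rw [abs_neg, abs_div]; exact div_le_self (abs_nonneg _) (ha.trans (le_abs_self _))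

lemma polynomialGrowth_dirDeriv_spaceDir_level (j : Fin N) :
    PolynomialGrowth P.box fun a ↦ dirDeriv (spaceDir j) (P.level a) := by
  simp_rw [dirDeriv_spaceDir_level]
  exact ((P.polynomialGrowth_time P.contDiff_slope.continuous).mul (const _)).add
    (((P.polynomialGrowth_div_param _).const_mul 2).mul (P.polynomialGrowth_apply j))

lemma polynomialGrowth_heatOp_level (σ : ℝ) :
    PolynomialGrowth P.box fun a ↦ heatOp σ (P.level a) := by
  unfold heatOp
  simp_rw [dirDeriv_timeDir_level, dirDeriv_spaceDir_spaceDir_level]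
  exact ((P.polynomialGrowth_quadratic (P.polynomialGrowth_time P.contDiff_slopeDeriv.continuous)
    (const 0) (const 0)).const_mul σ).add
    (sum _ fun _ ↦ (P.polynomialGrowth_div_param _).const_mul 2)

lemma polynomialGrowth_dirDeriv_spaceDir_weight (j : Fin N) :
    PolynomialGrowth P.box fun a ↦ dirDeriv (spaceDir j) (P.weight a) := by
  have hslope := P.polynomialGrowth_time P.contDiff_slope.continuous
  have hcurvature := P.polynomialGrowth_time (A := fun t ↦ 2 * -P.curvature t)
    (by have := P.contDiff_curvature.continuous; fun_prop)
  simp_rw [dirDeriv_spaceDir_weight]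
  exact ((P.polynomialGrowth_param.mul hslope).mul (const _)).add
    (hcurvature.mul (P.polynomialGrowth_apply j))

lemma polynomialGrowth_heatOp_weight (σ : ℝ) :
    PolynomialGrowth P.box fun a ↦ heatOp σ (P.weight a) := by
  have hslope := P.polynomialGrowth_time P.contDiff_slopeDeriv.continuous
  have hcurvature := P.polynomialGrowth_time P.contDiff_curvature.continuous
  unfold heatOp
  simp_rw [dirDeriv_timeDir_weight, P.carlemanWeight_weight.hessian, if_true]
  exact ((P.polynomialGrowth_quadratic (A := fun a t ↦ a * P.slopeDeriv t)
    (B := fun _ _ ↦ 64 * P.c ^ 2) (D := fun _ _ ↦ 0) (P.polynomialGrowth_param.mul hslope)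
    (const _) (const 0)).const_mul σ).add (sum _ fun _ ↦ hcurvature.const_mul _)

lemma polynomialGrowth_cutoff (hη : Continuous η) (hηc : HasCompactSupport η) :
    PolynomialGrowth P.box fun a ↦ P.cutoff a η :=
  let ⟨_, hM⟩ := hη.bounded_above_of_compact_support hηc
  .of_abs_le_const fun a _ p _ ↦
    (norm_indicator_le_norm_self (η ∘ P.level a) p).trans (hM _)

lemma polynomialGrowth_dirDeriv_spaceDir_cutoff (hη : ContDiff ℝ ∞ η)
    (hηs : tsupport η ⊆ Ici (3 / 4)) (hηc : HasCompactSupport (deriv η)) (j : Fin N) :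
    PolynomialGrowth P.box fun a ↦ dirDeriv (spaceDir j) (P.cutoff a η) :=
  ((P.polynomialGrowth_cutoff (contDiff_infty_iff_deriv.1 hη).2.continuous hηc).mul
    (P.polynomialGrowth_dirDeriv_spaceDir_level j)).congr
    fun _ ha _ _ ↦ congrFun (dirDeriv_cutoff (by linarith) hη hηs _) _

lemma polynomialGrowth_heatOp_cutoff (hη : ContDiff ℝ ∞ η) (hηs : tsupport η ⊆ Ici (3 / 4))
    (hηc : HasCompactSupport (deriv η)) (σ : ℝ) :
    PolynomialGrowth P.box fun a ↦ heatOp σ (P.cutoff a η) := by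
  have hη' : ContDiff ℝ ∞ (deriv η) := (contDiff_infty_iff_deriv.1 hη).2
  have hη'' : ContDiff ℝ ∞ (deriv (deriv η)) := (contDiff_infty_iff_deriv.1 hη').2
  exact (((P.polynomialGrowth_cutoff hη'.continuous hηc).mul
    (P.polynomialGrowth_heatOp_level σ)).add
    ((P.polynomialGrowth_cutoff hη''.continuous hηc.deriv).mul
      (sum _ fun i ↦ (P.polynomialGrowth_dirDeriv_spaceDir_level i).sq))).congr
    fun _ ha _ _ ↦ heatOp_cutoff (by linarith) hη hηs σ

lemma volume_real_box {a : ℝ} (ha : 0 ≤ a) :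
    volume.real (P.box a) = volume.real (P.box 1) * a ^ N := by
  have hr : 0 ≤ 729 * P.m * P.T ^ 3 / P.c := by
    have := P.T_pos
    have := P.c_pos
    have := P.m_pos
    positivity
  have hbox {b : ℝ} (hb : 0 ≤ b) : volume.real (P.box b)
      = volume.real (Icc (-(8 * P.T)) P.T) * ((729 * P.m * P.T ^ 3 / P.c * b) ^ N
        * volume.real (closedBall (0 : EuclideanSpace ℝ (Fin N)) 1)) := by
    rw [box, Measure.volume_eq_prod, measureReal_prod_prod, measureReal_def (s := closedBall _ _),
      Measure.addHaar_closedBall' _ _ (mul_nonneg hr hb), ENNReal.toReal_mul,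
      ENNReal.toReal_ofReal (by positivity), finrank_euclideanSpace_fin]
    rfl
  rw [hbox ha, hbox zero_le_one, mul_pow, mul_pow, one_pow]
  ring

end WeightParams

/-! ### Solutions in a half-space -/

section Profiles

variable {x : ℝ}

/-- The profile of the inner cut-off, rising smoothly from `0` at `1` to `1` at `2`. -/
def innerProfile (x : ℝ) : ℝ := Real.smoothTransition (x - 1)

/-- The profile of the outer cut-off, equal to `1` on `[1, 2]`, where `innerProfile` varies, and
supported in `[3/4, 9/4]`. -/
def outerProfile : ContDiffBump (3 / 2 : ℝ) := ⟨1 / 2, 3 / 4, by norm_num, by norm_num⟩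

lemma contDiff_innerProfile : ContDiff ℝ ∞ innerProfile :=
  Real.smoothTransition.contDiff.comp (contDiff_id.sub contDiff_const)

lemma innerProfile_of_le_one (hx : x ≤ 1) : innerProfile x = 0 :=
  Real.smoothTransition.zero_of_nonpos (by linarith)

lemma innerProfile_of_two_le (hx : 2 ≤ x) : innerProfile x = 1 :=
  Real.smoothTransition.one_of_one_le (by linarith)

lemma tsupport_innerProfile_subset : tsupport innerProfile ⊆ Ici 1 :=
  closure_minimal (fun _ hx ↦ not_lt.1 fun h ↦ hx (innerProfile_of_le_one h.le)) isClosed_Ici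

lemma tsupport_deriv_innerProfile_subset : tsupport (deriv innerProfile) ⊆ Icc 1 2 := by
  refine closure_minimal (fun x hx ↦ ⟨not_lt.1 fun h ↦ hx ?_, not_lt.1 fun h ↦ hx ?_⟩) isClosed_Icc
  · have hzero : innerProfile =ᶠ[𝓝 x] fun _ ↦ 0 := by
      filter_upwards [Iio_mem_nhds h] with y hy using innerProfile_of_le_one (le_of_lt hy)
    simp [hzero.deriv_eq]
  · have hone : innerProfile =ᶠ[𝓝 x] fun _ ↦ 1 := by
      filter_upwards [Ioi_mem_nhds h] with y hy using innerProfile_of_two_le (le_of_lt hy)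
    simp [hone.deriv_eq]

lemma hasCompactSupport_deriv_innerProfile : HasCompactSupport (deriv innerProfile) :=
  isCompact_Icc.of_isClosed_subset (isClosed_tsupport _) tsupport_deriv_innerProfile_subset

lemma tsupport_outerProfile : tsupport outerProfile = Icc (3 / 4) (9 / 4) := by
  rw [outerProfile.tsupport_eq, Real.closedBall_eq_Icc]
  norm_num [outerProfile]

lemma outerProfile_of_mem_Icc (hx : x ∈ Icc 1 2) : outerProfile x = 1 := by
  refine outerProfile.one_of_mem_closedBall ?_
  rw [Real.closedBall_eq_Icc]
  norm_num [outerProfile] at hx ⊢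
  exact hx

lemma tsupport_innerProfile_subset_Ici : tsupport innerProfile ⊆ Ici (3 / 4) :=
  tsupport_innerProfile_subset.trans (Ici_subset_Ici.2 (by norm_num))

lemma tsupport_deriv_innerProfile_subset_Icc :
    tsupport (deriv innerProfile) ⊆ Icc (3 / 4) (9 / 4) :=
  tsupport_deriv_innerProfile_subset.trans (Icc_subset_Icc (by norm_num) (by norm_num))

lemma tsupport_outerProfile_subset_Ici : tsupport outerProfile ⊆ Ici (3 / 4) :=
  tsupport_outerProfile.subset.trans Icc_subset_Ici_self

end Profiles

namespace WeightParams

open PolynomialGrowth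

variable (P : WeightParams N) {a b q C : ℝ}

/-- The inner cut-off, localizing a solution to the set where `level a ≥ 1`. -/
def innerCutoff (a : ℝ) : SpaceTime N → ℝ := P.cutoff a innerProfile

/-- The outer cut-off, which with a suitable constant `q` controls the weighted gradient of
`innerCutoff a`. -/
def outerCutoff (q a : ℝ) (p : SpaceTime N) : ℝ :=
  q * (Real.exp (2 * P.weight a p) * P.cutoff a outerProfile p)

/-- The part of the closed time slab where `3/4 ≤ level a ≤ 9/4`. -/
def shell (a : ℝ) : Set (SpaceTime N) := {p ∈ P.superlevel a | P.level a p ≤ 9 / 4}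

variable {P}

lemma tsupport_cutoff_subset_shell {η : ℝ → ℝ} (hη : tsupport η ⊆ Icc (3 / 4) (9 / 4)) :
    tsupport (P.cutoff a η) ⊆ P.shell a := fun _ hp ↦
  ⟨tsupport_cutoff_subset (hη.trans Icc_subset_Ici_self) hp,
    (hη (tsupport_indicator_comp_subset (P.contDiff_level (a := a)).continuous hp).2).2⟩

lemma contDiff_innerCutoff (ha : 0 < a) : ContDiff ℝ ∞ (P.innerCutoff a) :=
  contDiff_cutoff ha contDiff_innerProfile tsupport_innerProfile_subset_Ici

lemma contDiff_cutoff_outerProfile (ha : 0 < a) : ContDiff ℝ ∞ (P.cutoff a outerProfile) :=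
  contDiff_cutoff ha outerProfile.contDiff tsupport_outerProfile_subset_Ici

lemma contDiff_outerCutoff (ha : 0 < a) : ContDiff ℝ ∞ (P.outerCutoff q a) := by
  have := contDiff_cutoff_outerProfile (P := P) ha
  unfold outerCutoff
  fun_prop

lemma tsupport_innerCutoff_subset : tsupport (P.innerCutoff a) ⊆ P.superlevel a :=
  tsupport_cutoff_subset tsupport_innerProfile_subset_Ici

lemma tsupport_outerCutoff_subset : tsupport (P.outerCutoff q a) ⊆ P.shell a :=
  (closure_mono <| Function.support_subset_iff'.2 fun p hp ↦ by
    simp [outerCutoff, Function.notMem_support.1 hp]).trans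
    (tsupport_cutoff_subset_shell tsupport_outerProfile.subset)

lemma outerCutoff_nonneg (hq : 0 ≤ q) (p : SpaceTime N) : 0 ≤ P.outerCutoff q a p :=
  mul_nonneg hq (mul_nonneg (Real.exp_pos _).le
    (indicator_nonneg (fun _ _ ↦ outerProfile.nonneg) p))

lemma cutoff_outerProfile_eq_one (h : P.cutoff a (deriv innerProfile) p ≠ 0) :
    P.cutoff a outerProfile p = 1 := by
  rw [cutoff, indicator_of_mem (indicator_apply_ne_zero.1 h).1]
  exact outerProfile_of_mem_Icc
    (tsupport_deriv_innerProfile_subset (level_mem_tsupport_of_cutoff_ne_zero h))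

variable (P) in
lemma exists_cutoffPair : ∃ M : ℝ, 0 ≤ M ∧ ∃ n : ℕ, ∀ a, 1 ≤ a →
    CutoffPair (P.weight a) (P.innerCutoff a) (P.outerCutoff (M * a ^ n) a) := by
  obtain ⟨M, hM, n, hgrad⟩ := sum Finset.univ fun i ↦
    (P.polynomialGrowth_dirDeriv_spaceDir_cutoff contDiff_innerProfile
      tsupport_innerProfile_subset_Ici hasCompactSupport_deriv_innerProfile i).sq
  refine ⟨M, hM, n, fun a ha ↦ ?_⟩
  have ha₀ : 0 < a := by linarith
  have hq : 0 ≤ M * a ^ n := by positivity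
  refine ⟨contDiff_innerCutoff ha₀, hasCompactSupport_cutoff ha₀ tsupport_innerProfile_subset_Ici,
    contDiff_outerCutoff ha₀, P.isCompact_box.of_isClosed_subset (isClosed_tsupport _)
      ((tsupport_outerCutoff_subset.trans (sep_subset _ _)).trans (superlevel_subset_box ha₀)),
    outerCutoff_nonneg hq, fun p ↦ ?_⟩
  by_cases h : P.cutoff a (deriv innerProfile) p = 0
  · simpa [innerCutoff, dirDeriv_cutoff ha₀ contDiff_innerProfile tsupport_innerProfile_subset_Ici,
      h] using outerCutoff_nonneg hq p
  · have hp := superlevel_subset_box ha₀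
      (tsupport_cutoff_subset_shell tsupport_deriv_innerProfile_subset_Icc (subset_tsupport _ h)).1
    rw [outerCutoff, cutoff_outerProfile_eq_one h, mul_one, two_mul, Real.exp_add, ← pow_two]
    gcongr
    exact (le_abs_self _).trans (hgrad a ha p hp)

lemma heatOp_innerCutoff_eq_zero (ha : 0 < a) (hp : p ∉ P.shell a) :
    heatOp 1 (P.innerCutoff a) p = 0 := by
  have hderiv := tsupport_deriv_innerProfile_subset_Icc
  rw [innerCutoff, heatOp_cutoff ha contDiff_innerProfile tsupport_innerProfile_subset_Ici,
    image_eq_zero_of_notMem_tsupport fun h ↦ hp (tsupport_cutoff_subset_shell hderiv h),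
    image_eq_zero_of_notMem_tsupport fun h ↦
      hp (tsupport_cutoff_subset_shell (tsupport_deriv_subset.trans hderiv) h)]
  simp

lemma cutoffError_eq_zero (ha : 0 < a) (hp : p ∉ P.shell a) :
    cutoffError (P.weight a) (P.innerCutoff a) (P.outerCutoff q a) C p = 0 := by
  have houter : p ∉ tsupport (P.outerCutoff q a) := fun h ↦ hp (tsupport_outerCutoff_subset h)
  simp [cutoffError, heatOp_innerCutoff_eq_zero ha hp, heatOp_eq_zero_of_notMem_tsupport houter,
    image_eq_zero_of_notMem_tsupport houter]

lemma heatOp_outerCutoff (ha : 0 < a) (p : SpaceTime N) :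
    heatOp (-1) (P.outerCutoff q a) p = Real.exp (P.weight a p) ^ 2
      * (q * (heatOp (-1) (P.cutoff a outerProfile) p
        + (2 * heatOp (-1) (P.weight a) p + ∑ i, (2 * dirDeriv (spaceDir i) (P.weight a) p) ^ 2)
          * P.cutoff a outerProfile p
        + 2 * ∑ i, 2 * dirDeriv (spaceDir i) (P.weight a) p
          * dirDeriv (spaceDir i) (P.cutoff a outerProfile) p)) := by
  have hcutoff := contDiff_cutoff_outerProfile (P := P) ha
  unfold outerCutoff
  rw [heatOp_const_mul (g := fun p ↦ Real.exp (2 * P.weight a p) * P.cutoff a outerProfile p) q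
    (by fun_prop), heatOp_exp_mul (f := fun p ↦ 2 * P.weight a p) (by fun_prop) hcutoff,
    heatOp_const_mul _ (by fun_prop)]
  simp (disch := fun_prop) only [dirDeriv_const_mul]
  rw [two_mul (P.weight a p), Real.exp_add]
  ring

variable (P) in
lemma polynomialGrowth_cutoffError (M : ℝ) (n : ℕ) (C : ℝ) :
    PolynomialGrowth P.box fun a p ↦
      cutoffError (P.weight a) (P.innerCutoff a) (P.outerCutoff (M * a ^ n) a) C p
        / Real.exp (P.weight a p) ^ 2 := by
  have hparam : PolynomialGrowth P.box fun a _ ↦ M * a ^ n := (param_pow n).const_mul M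
  have hinner := P.polynomialGrowth_heatOp_cutoff contDiff_innerProfile
    tsupport_innerProfile_subset_Ici hasCompactSupport_deriv_innerProfile 1
  have houter := P.polynomialGrowth_cutoff outerProfile.continuous
    outerProfile.hasCompactSupport
  have houter_grad := P.polynomialGrowth_dirDeriv_spaceDir_cutoff outerProfile.contDiff
    tsupport_outerProfile_subset_Ici outerProfile.hasCompactSupport.deriv
  have houter_heat := P.polynomialGrowth_heatOp_cutoff outerProfile.contDiff
    tsupport_outerProfile_subset_Ici outerProfile.hasCompactSupport.deriv (-1)
  have hweight (i : Fin N) := (P.polynomialGrowth_dirDeriv_spaceDir_weight i).const_mul 2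
  have hdual := hparam.mul ((houter_heat.add
    ((((P.polynomialGrowth_heatOp_weight (-1)).const_mul 2).add
      (sum Finset.univ fun i ↦ (hweight i).sq)).mul houter)).add
    ((sum Finset.univ fun i ↦ (hweight i).mul (houter_grad i)).const_mul 2))
  refine (((hinner.sq.const_mul 3).add (hdual.abs.const_mul 6)).add
    (((hparam.mul houter).const_mul C).const_mul 12)).congr fun a ha p _ ↦ ?_
  rw [div_eq_iff (by positivity), cutoffError, heatOp_outerCutoff (by linarith), abs_mul,
    abs_of_nonneg (sq_nonneg (Real.exp _)), outerCutoff, two_mul (P.weight a p), Real.exp_add]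
  unfold innerCutoff
  ring

lemma weight_eq (ha : a ≠ 0) (p : SpaceTime N) :
    P.weight a p = a * P.level a p - (P.curvature p.1 - P.c) * ‖p.2‖ ^ 2 := by
  simp only [weight, level, quadratic]
  field_simp
  ring

lemma sq_exp_weight_mul_sq_le (ha : 0 < a) (hT : p.1 ≤ P.T) {v : ℝ}
    (hv : |v| ≤ Real.exp (P.c * ‖p.2‖ ^ 2)) (hb : P.level a p ≤ b) :
    Real.exp (P.weight a p) ^ 2 * v ^ 2 ≤ Real.exp (b * a) ^ 2 := by
  have := P.c_pos
  have hnorm : 2 * P.c * ‖p.2‖ ^ 2 ≤ P.curvature p.1 * ‖p.2‖ ^ 2 := by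
    gcongr; linarith [P.le_curvature hT]
  have hlevel := mul_le_mul_of_nonneg_left hb ha.le
  rw [← mul_pow, ← sq_abs (_ * v), abs_mul, Real.abs_exp]
  gcongr
  calc Real.exp (P.weight a p) * |v|
      ≤ Real.exp (P.weight a p) * Real.exp (P.c * ‖p.2‖ ^ 2) := by gcongr
    _ = Real.exp (P.weight a p + P.c * ‖p.2‖ ^ 2) := (Real.exp_add _ _).symm
    _ ≤ Real.exp (b * a) := by
      rw [Real.exp_le_exp, weight_eq ha.ne']; linarith

variable (P) in
lemma eventually_le_carlemanGain_weight (B : ℝ) : ∀ᶠ a in atTop, ∀ p : SpaceTime N, 0 ≤ p.1 →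
    P.innerCutoff a p ≠ 0 → B ≤ carlemanGain (P.weight a) P.curvature p := by
  have hT := P.T_pos
  have hm := P.m_pos
  have hlim : Tendsto (fun a ↦ 7 / (729 * P.T ^ 2) * a) atTop atTop :=
    tendsto_id.const_mul_atTop (by positivity)
  filter_upwards [eventually_gt_atTop 0, hlim.eventually_ge_atTop (B + 256 * P.c ^ 2)]
    with a ha hB p h0 hp
  have hsuper := tsupport_innerCutoff_subset (subset_tsupport _ hp)
  have hlevel : 1 ≤ P.level a p :=
    tsupport_innerProfile_subset (level_mem_tsupport_of_cutoff_ne_zero hp)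
  have hgain := le_carlemanGain_weight P ha.le h0 hsuper.1.2
    (normal_pos_of_mem_superlevel ha hsuper).le
  have hlinear : 7 / (729 * P.T ^ 2) * a ≤ 7 * P.T * P.m * a * p.2 P.i₀ :=
    calc 7 / (729 * P.T ^ 2) * a
        ≤ 7 / (729 * P.T ^ 2) * a * (729 * P.m * P.T ^ 3 * p.2 P.i₀) :=
          le_mul_of_one_le_right (by positivity) (hlevel.trans (level_le_mul_normal ha hsuper))
      _ = 7 * P.T * P.m * a * p.2 P.i₀ := by field_simp
  linarith

end WeightParams

section Vanishing

variable {V : SpaceTime N → ℝ} {C : ℝ}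

lemma CarlemanWeight.integral_sq_le_integral_cutoffError {φ χ ψ : SpaceTime N → ℝ} {κ : ℝ → ℝ}
    {O : Set (SpaceTime N)} (hφ : CarlemanWeight φ κ) (hχψ : CutoffPair φ χ ψ)
    (hV : Continuous V) (hV₀ : ∀ p, p.1 ≤ 0 → V p = 0) (hO : IsOpen O)
    (hVC : ∀ p ∈ O, 0 < p.1 → ∃ ℓ, HasHeatAt V ℓ p ∧ |ℓ| ≤ C * |V p|)
    (hχO : tsupport χ ⊆ O) (hψO : tsupport ψ ⊆ O)
    (hgain : ∀ p, 0 < p.1 → χ p ≠ 0 → 3 * C ^ 2 + 1 ≤ carlemanGain φ κ p) :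
    ∫ p, (Real.exp (φ p) * χ p) ^ 2 * V p ^ 2 ≤ ∫ p, cutoffError φ χ ψ C p * V p ^ 2 := by
  have hφs := hφ.contDiff
  have hκ := hφ.contDiff_curvature
  have hχ := hχψ.contDiff_inner
  have hχc := hχψ.hasCompactSupport_inner
  have hsq : Integrable fun p ↦ (Real.exp (φ p) * χ p) ^ 2 * V p ^ 2 :=
    (by fun_prop : Continuous _).integrable_of_hasCompactSupport <|
      HasCompactSupport.intro hχc fun p hp ↦ by simp [image_eq_zero_of_notMem_tsupport hp]
  have hgain_sq : Integrable fun p ↦ carlemanGain φ κ p * (Real.exp (φ p) * χ p) ^ 2 * V p ^ 2 :=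
    (by fun_prop : Continuous _).integrable_of_hasCompactSupport <|
      HasCompactSupport.intro hχc fun p hp ↦ by simp [image_eq_zero_of_notMem_tsupport hp]
  have herror : Integrable fun p ↦ cutoffError φ χ ψ C p * V p ^ 2 := by
    have := hχψ.continuous_cutoffError (C := C) hφs.continuous
    exact (by fun_prop : Continuous _).integrable_of_hasCompactSupport <|
      HasCompactSupport.intro hχψ.isCompact_union_tsupport fun p hp ↦ by
        simp [cutoffError_eq_zero_of_notMem hp]
  have hlower : (3 * C ^ 2 + 1) * ∫ p, (Real.exp (φ p) * χ p) ^ 2 * V p ^ 2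
      ≤ ∫ p, carlemanGain φ κ p * (Real.exp (φ p) * χ p) ^ 2 * V p ^ 2 := by
    rw [← integral_const_mul]
    refine integral_mono (hsq.const_mul _) hgain_sq fun p ↦ ?_
    simp only [mul_assoc]
    rcases le_or_gt p.1 0 with hp | hp
    · simp [hV₀ p hp]
    · rcases eq_or_ne (χ p) 0 with hz | hz
      · simp [hz]
      · exact mul_le_mul_of_nonneg_right (hgain p hp hz) (by positivity)
  have hupper := hφ.localized_inequality_of_hasHeatAt hχψ hV hV₀ hO hVC hχO hψO
  simp only [add_mul, mul_assoc (3 * C ^ 2)] at hupper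
  rw [integral_add (hsq.const_mul _) herror, integral_const_mul] at hupper
  linarith

/-- A continuous function which vanishes for times `t ≤ 0` and, for times in `(0, T)` in the
half-space `y_{i₀} > 0`, satisfies `|V_t + ΔV| ≤ C |V|` pointwise and `|V| ≤ e^{c|y|²}`. -/
structure IsHalfSpaceSolution (i₀ : Fin N) (T c C : ℝ) (V : SpaceTime N → ℝ) : Prop where
  continuous : Continuous V
  eq_zero_of_nonpos : ∀ p : SpaceTime N, p.1 ≤ 0 → V p = 0
  hasHeatAt : ∀ p : SpaceTime N, p.1 ∈ Ioo 0 T → 0 < p.2 i₀ →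
    ∃ ℓ, HasHeatAt V ℓ p ∧ |ℓ| ≤ C * |V p|
  abs_le : ∀ p : SpaceTime N, p.1 ∈ Ioo 0 T → 0 < p.2 i₀ → |V p| ≤ Real.exp (c * ‖p.2‖ ^ 2)

namespace WeightParams

variable {P : WeightParams N} {a : ℝ}

lemma superlevel_subset (ha : 0 < a) :
    P.superlevel a ⊆ {p : SpaceTime N | p.1 < P.T ∧ 0 < p.2 P.i₀} :=
  fun _ hp ↦ ⟨lt_of_mem_superlevel ha hp, normal_pos_of_mem_superlevel ha hp⟩

lemma isOpen_halfSpace_before : IsOpen {p : SpaceTime N | p.1 < P.T ∧ 0 < p.2 P.i₀} :=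
  (isOpen_lt continuous_fst continuous_const).inter
    (isOpen_lt continuous_const (contDiff_snd_apply P.i₀).continuous)

lemma eventually_integral_sq_le_integral_cutoffError
    (hV : IsHalfSpaceSolution P.i₀ P.T P.c C V) : ∀ᶠ a in atTop, ∀ q,
      CutoffPair (P.weight a) (P.innerCutoff a) (P.outerCutoff q a) →
      ∫ p, (Real.exp (P.weight a p) * P.innerCutoff a p) ^ 2 * V p ^ 2
        ≤ ∫ p, cutoffError (P.weight a) (P.innerCutoff a) (P.outerCutoff q a) C p * V p ^ 2 := by
  filter_upwards [eventually_gt_atTop 0, P.eventually_le_carlemanGain_weight (3 * C ^ 2 + 1)]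
    with a ha hgain q hpair
  exact P.carlemanWeight_weight.integral_sq_le_integral_cutoffError hpair hV.continuous
    hV.eq_zero_of_nonpos isOpen_halfSpace_before
    (fun p hp h0 ↦ hV.hasHeatAt p ⟨h0, hp.1⟩ hp.2)
    (tsupport_innerCutoff_subset.trans (superlevel_subset ha))
    ((tsupport_outerCutoff_subset.trans (sep_subset _ _)).trans (superlevel_subset ha))
    fun p h0 hp ↦ hgain p h0.le hp

lemma sq_exp_weight_mul_sq_le_of_mem_shell (hV : IsHalfSpaceSolution P.i₀ P.T P.c C V)
    (ha : 0 < a) (hp : p ∈ P.shell a) :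
    Real.exp (P.weight a p) ^ 2 * V p ^ 2 ≤ Real.exp (9 / 4 * a) ^ 2 := by
  rcases le_or_gt p.1 0 with h0 | h0
  · rw [hV.eq_zero_of_nonpos p h0, zero_pow two_ne_zero, mul_zero]
    positivity
  · exact sq_exp_weight_mul_sq_le ha hp.1.1.2 (hV.abs_le p ⟨h0, lt_of_mem_superlevel ha hp.1⟩
      (normal_pos_of_mem_superlevel ha hp.1)) hp.2

lemma exists_integral_cutoffError_le (hV : IsHalfSpaceSolution P.i₀ P.T P.c C V) (M : ℝ) (n : ℕ) :
    ∃ (M' : ℝ) (k : ℕ), ∀ a, 1 ≤ a →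
      ∫ p, cutoffError (P.weight a) (P.innerCutoff a) (P.outerCutoff (M * a ^ n) a) C p * V p ^ 2
        ≤ M' * a ^ k * Real.exp (9 / 4 * a) ^ 2 := by
  obtain ⟨M', hM', k, herror⟩ := P.polynomialGrowth_cutoffError M n C
  refine ⟨M' * volume.real (P.box 1), k + N, fun a ha ↦ ?_⟩
  have ha₀ : 0 < a := by linarith
  set E := cutoffError (P.weight a) (P.innerCutoff a) (P.outerCutoff (M * a ^ n) a) C
  have hzero (p : SpaceTime N) (hp : p ∉ P.shell a) : E p = 0 := cutoffError_eq_zero ha₀ hp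
  have hbound (p : SpaceTime N) (hp : p ∈ P.box a) :
      ‖E p * V p ^ 2‖ ≤ M' * a ^ k * Real.exp (9 / 4 * a) ^ 2 := by
    by_cases hshell : p ∈ P.shell a
    · have hsplit : E p * V p ^ 2 = E p / Real.exp (P.weight a p) ^ 2
          * (Real.exp (P.weight a p) ^ 2 * V p ^ 2) := by field_simp
      rw [hsplit, norm_mul, Real.norm_of_nonneg (by positivity : 0 ≤ _ ^ 2 * V p ^ 2)]
      exact mul_le_mul (herror a ha p hp) (sq_exp_weight_mul_sq_le_of_mem_shell hV ha₀ hshell)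
        (by positivity) (by positivity)
    · rw [hzero p hshell, zero_mul, norm_zero]
      positivity
  rw [← setIntegral_eq_integral_of_forall_compl_eq_zero (s := P.box a) fun p hp ↦ by
    rw [hzero p fun h ↦ hp (superlevel_subset_box ha₀ h.1), zero_mul]]
  calc ∫ p in P.box a, E p * V p ^ 2
      ≤ M' * a ^ k * Real.exp (9 / 4 * a) ^ 2 * volume.real (P.box a) :=
        (le_abs_self _).trans
          (norm_setIntegral_le_of_norm_le_const P.isCompact_box.measure_lt_top hbound)
    _ = M' * volume.real (P.box 1) * a ^ (k + N) * Real.exp (9 / 4 * a) ^ 2 := by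
        rw [volume_real_box P ha₀.le, pow_add]; ring

lemma exists_eventually_integral_le (hV : IsHalfSpaceSolution P.i₀ P.T P.c C V) :
    ∃ (M : ℝ) (n : ℕ), ∀ᶠ a in atTop,
      ∫ p, (Real.exp (P.weight a p) * P.innerCutoff a p) ^ 2 * V p ^ 2
        ≤ M * a ^ n * Real.exp (9 / 4 * a) ^ 2 := by
  obtain ⟨M, _, n, hpair⟩ := P.exists_cutoffPair
  obtain ⟨M', k, herror⟩ := exists_integral_cutoffError_le hV M n
  refine ⟨M', k, ?_⟩
  filter_upwards [eventually_ge_atTop 1, eventually_integral_sq_le_integral_cutoffError hV]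
    with a ha hle using (hle _ (hpair a ha)).trans (herror a ha)

lemma le_level {R : ℝ} (ha : 0 < a) (haR : 2 * P.c * R ≤ a) (hp : ‖p.2‖ ^ 2 ≤ R) :
    P.slope p.1 * p.2 P.i₀ - 1 / 2 ≤ P.level a p := by
  have := P.c_pos
  have : P.c / a * ‖p.2‖ ^ 2 ≤ 1 / 2 := by
    rw [div_mul_eq_mul_div, div_le_iff₀ ha]
    nlinarith
  rw [level_eq]
  linarith

lemma le_weight {R : ℝ} (ha : 0 < a) (h0 : 0 ≤ p.1) (hp : ‖p.2‖ ^ 2 ≤ R) :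
    a * P.level a p - 3 * P.c * R ≤ P.weight a p := by
  have := P.c_pos
  have hconcave : (P.curvature p.1 - P.c) * ‖p.2‖ ^ 2 ≤ 3 * P.c * R :=
    mul_le_mul (by linarith [P.curvature_le h0]) hp (sq_nonneg _) (by positivity)
  rw [weight_eq ha.ne']
  linarith

lemma innerCutoff_eq_one (hp : p.1 ∈ Ioo (-(8 * P.T)) P.T) (hlevel : 2 ≤ P.level a p) :
    P.innerCutoff a p = 1 := by
  rw [innerCutoff, cutoff, indicator_of_mem (show p ∈ P.slab from hp)]
  exact innerProfile_of_two_le hlevel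

lemma integrable_sq_exp_weight_mul_innerCutoff (hV : Continuous V) (ha : 0 < a) :
    Integrable fun p ↦ (Real.exp (P.weight a p) * P.innerCutoff a p) ^ 2 * V p ^ 2 := by
  have := contDiff_innerCutoff (P := P) ha
  exact (by fun_prop : Continuous _).integrable_of_hasCompactSupport <|
    HasCompactSupport.intro (K := tsupport (P.innerCutoff a))
      (hasCompactSupport_cutoff ha tsupport_innerProfile_subset_Ici)
      fun p hp ↦ by simp [image_eq_zero_of_notMem_tsupport hp]

lemma exists_eventually_le_integral {p₀ : SpaceTime N} (hV : Continuous V)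
    (hp₀ : p₀.1 ∈ Ioo 0 P.T) (hslope : 11 / 2 < P.slope p₀.1 * p₀.2 P.i₀) (hne : V p₀ ≠ 0) :
    ∃ K > 0, ∀ᶠ a in atTop, K * Real.exp (5 * a) ^ 2
      ≤ ∫ p, (Real.exp (P.weight a p) * P.innerCutoff a p) ^ 2 * V p ^ 2 := by
  have hT := P.T_pos
  obtain ⟨R, hR⟩ := exists_gt (‖p₀.2‖ ^ 2)
  obtain ⟨v, hv, hvV⟩ := exists_between (abs_pos.2 hne)
  have hnear : ∀ᶠ p in 𝓝 p₀, v < |V p| ∧ p.1 ∈ Ioo 0 P.T ∧ 11 / 2 < P.slope p.1 * p.2 P.i₀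
      ∧ ‖p.2‖ ^ 2 < R := by
    have hcont : Continuous fun p : SpaceTime N ↦ P.slope p.1 * p.2 P.i₀ :=
      (by fun_prop : ContDiff ℝ ∞ _).continuous
    exact (hV.abs.continuousAt.eventually (lt_mem_nhds hvV)).and
      ((continuous_fst.continuousAt.eventually (Ioo_mem_nhds hp₀.1 hp₀.2)).and
        ((hcont.continuousAt.eventually (lt_mem_nhds hslope)).and
          (contDiff_norm_snd_sq.continuous.continuousAt.eventually (gt_mem_nhds hR))))
  obtain ⟨r, hr, hball⟩ := nhds_basis_closedBall.mem_iff.1 hnear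
  have hvol : 0 < volume.real (closedBall p₀ r) :=
    ENNReal.toReal_pos (measure_closedBall_pos volume p₀ hr).ne'
      (isCompact_closedBall p₀ r).measure_lt_top.ne
  refine ⟨Real.exp (-(3 * P.c * R)) ^ 2 * v ^ 2 * volume.real (closedBall p₀ r), by positivity, ?_⟩
  filter_upwards [eventually_gt_atTop 0, eventually_ge_atTop (2 * P.c * R)] with a ha haR
  have hintegrable := integrable_sq_exp_weight_mul_innerCutoff (P := P) hV ha
  have hlower (p : SpaceTime N) (hp : p ∈ closedBall p₀ r) :
      (Real.exp (-(3 * P.c * R)) * Real.exp (5 * a)) ^ 2 * v ^ 2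
        ≤ (Real.exp (P.weight a p) * P.innerCutoff a p) ^ 2 * V p ^ 2 := by
    obtain ⟨hVp, htime, hslope, hnorm⟩ := hball hp
    have hlevel : 5 ≤ P.level a p := by linarith [le_level ha haR hnorm.le]
    have hweight := le_weight (P := P) ha htime.1.le hnorm.le
    rw [innerCutoff_eq_one ⟨by linarith [htime.1], htime.2⟩ (by linarith), mul_one,
      ← Real.exp_add, ← sq_abs (V p)]
    gcongr
    nlinarith
  calc _ = (Real.exp (-(3 * P.c * R)) * Real.exp (5 * a)) ^ 2 * v ^ 2
        * volume.real (closedBall p₀ r) := by ring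
    _ ≤ ∫ p in closedBall p₀ r, (Real.exp (P.weight a p) * P.innerCutoff a p) ^ 2 * V p ^ 2 :=
        setIntegral_ge_of_const_le_real measurableSet_closedBall
          (isCompact_closedBall p₀ r).measure_lt_top.ne hlower hintegrable.integrableOn
    _ ≤ _ := setIntegral_le_integral hintegrable (.of_forall fun p ↦ by positivity)

end WeightParams

lemma eventually_pow_mul_exp_lt {K : ℝ} (hK : 0 < K) (M : ℝ) (n : ℕ) :
    ∀ᶠ a in atTop, M * a ^ n * Real.exp (9 / 4 * a) ^ 2 < K * Real.exp (5 * a) ^ 2 := by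
  have hlim : Tendsto (fun a ↦ M * (a ^ n * Real.exp (-a))) atTop (𝓝 0) := by
    simpa using (Real.tendsto_pow_mul_exp_neg_atTop_nhds_zero n).const_mul M
  filter_upwards [hlim.eventually_lt_const hK, eventually_ge_atTop 0] with a hlt ha
  calc M * a ^ n * Real.exp (9 / 4 * a) ^ 2
      = M * (a ^ n * Real.exp (-a)) * Real.exp (11 / 2 * a) := by
        simp only [pow_two (Real.exp _), mul_assoc, ← Real.exp_add]
        ring_nf
    _ < K * Real.exp (11 / 2 * a) := by gcongr
    _ ≤ K * Real.exp (10 * a) := by gcongr; norm_num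
    _ = K * Real.exp (5 * a) ^ 2 := by rw [pow_two, ← Real.exp_add]; ring_nf

/-- The amplitude of the weight is chosen so that `level a p → 6` as `a → ∞`, well above the value
`9/4` bounding the cut-off error. -/
theorem IsHalfSpaceSolution.eq_zero {i₀ : Fin N} {T c : ℝ} (hV : IsHalfSpaceSolution i₀ T c C V)
    (hc : 0 < c) (hcT : 256 * c * T ≤ 1) (hp : p.1 ∈ Ioo 0 T) (hp₀ : 0 < p.2 i₀) : V p = 0 := by
  by_contra hne
  have hgap : 0 < T - p.1 := sub_pos.2 hp.2
  have htime : 0 < p.1 + 8 * T := by linarith [hp.1]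
  let P : WeightParams N :=
    ⟨T, c, 6 / ((T - p.1) ^ 2 * (p.1 + 8 * T) * p.2 i₀), i₀, by linarith [hp.1], hc, by positivity,
      hcT⟩
  have hslope : P.slope p.1 * p.2 P.i₀ = 6 := by
    calc _ = 6 / ((T - p.1) ^ 2 * (p.1 + 8 * T) * p.2 i₀)
          * ((T - p.1) ^ 2 * (p.1 + 8 * T) * p.2 i₀) := by
          simp only [WeightParams.slope, P]; ring
      _ = 6 := div_mul_cancel₀ _ (by positivity)
  obtain ⟨M, n, hupper⟩ := WeightParams.exists_eventually_integral_le (P := P) hV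
  obtain ⟨K, hK, hlower⟩ :=
    WeightParams.exists_eventually_le_integral (P := P) hV.continuous hp (by linarith) hne
  obtain ⟨a, hle, hge, hlt⟩ := (hupper.and (hlower.and (eventually_pow_mul_exp_lt hK M n))).exists
  exact (hge.trans hle).not_gt hlt

end Vanishing

/-! ### Extension to space-time and continuation in time -/

section HalfSpace

variable {i₀ : Fin N} {S C₁ C₂ τ T : ℝ} {w : ℝ → EuclideanSpace ℝ (Fin N) → ℝ}

/-- The open half-space `y_{i₀} > 0`. -/
def halfSpace (i₀ : Fin N) : Set (EuclideanSpace ℝ (Fin N)) := {y | 0 < y i₀}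

lemma continuous_apply_coord (i : Fin N) : Continuous fun y : EuclideanSpace ℝ (Fin N) ↦ y i :=
  (EuclideanSpace.proj (𝕜 := ℝ) i).continuous

lemma isOpen_halfSpace (i₀ : Fin N) : IsOpen (halfSpace i₀) :=
  isOpen_lt continuous_const (continuous_apply_coord i₀)

/-- The projection onto the closed half-space `y_{i₀} ≥ 0` along the normal direction. -/
def halfSpaceProj (i₀ : Fin N) (y : EuclideanSpace ℝ (Fin N)) : EuclideanSpace ℝ (Fin N) :=
  y + (max (y i₀) 0 - y i₀) • EuclideanSpace.single i₀ 1

lemma continuous_halfSpaceProj (i₀ : Fin N) : Continuous (halfSpaceProj i₀) := by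
  have := continuous_apply_coord i₀
  unfold halfSpaceProj
  fun_prop

lemma halfSpaceProj_of_mem {y : EuclideanSpace ℝ (Fin N)} (hy : y ∈ halfSpace i₀) :
    halfSpaceProj i₀ y = y := by
  rw [halfSpaceProj, max_eq_left (le_of_lt hy), sub_self, zero_smul, add_zero]

lemma mem_closure_halfSpace {y : EuclideanSpace ℝ (Fin N)} (hy : 0 ≤ y i₀) :
    y ∈ closure (halfSpace i₀) := by
  refine mem_closure_of_tendsto
    ((tendsto_line y (EuclideanSpace.single i₀ 1)).mono_left (nhdsWithin_le_nhds (s := Ioi 0))) ?_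
  filter_upwards [self_mem_nhdsWithin] with s hs
  simpa [halfSpace] using add_pos_of_nonneg_of_pos hy hs

lemma halfSpaceProj_mem_closure (y : EuclideanSpace ℝ (Fin N)) :
    halfSpaceProj i₀ y ∈ closure (halfSpace i₀) :=
  mem_closure_halfSpace (by simp [halfSpaceProj])

/-- The hypotheses of the uniqueness theorem, except for the vanishing at the initial time. -/
structure HalfSpaceInequality (i₀ : Fin N) (S C₁ C₂ : ℝ)
    (w : ℝ → EuclideanSpace ℝ (Fin N) → ℝ) : Prop where
  continuousOn : ContinuousOn (fun q : SpaceTime N ↦ w q.1 q.2)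
    (Icc 0 S ×ˢ closure (halfSpace i₀))
  contDiffOn_space : ∀ s ∈ Ioo 0 S, ContDiffOn ℝ 2 (w s) (halfSpace i₀)
  differentiableAt_time : ∀ y ∈ halfSpace i₀, ∀ s ∈ Ioo 0 S,
    DifferentiableAt ℝ (fun σ ↦ w σ y) s
  abs_le : ∀ s ∈ Ioo 0 S, ∀ y ∈ halfSpace i₀, |w s y| ≤ Real.exp (C₁ * ‖y‖ ^ 2)
  abs_heat_le : ∀ s ∈ Ioo 0 S, ∀ y ∈ halfSpace i₀,
    |deriv (fun σ ↦ w σ y) s + lap (w s) y| ≤ C₂ * |w s y|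

/-- The function `w`, started at time `τ` and stopped after a time span `T`, extended to
space-time by freezing it outside of the time interval and along the inner normal outside of the
half-space. -/
def extension (i₀ : Fin N) (τ T : ℝ) (w : ℝ → EuclideanSpace ℝ (Fin N) → ℝ)
    (p : SpaceTime N) : ℝ :=
  w (τ + max 0 (min p.1 T)) (halfSpaceProj i₀ p.2)

lemma extension_eq (hp : p.1 ∈ Ioo 0 T) (hp₀ : p.2 ∈ halfSpace i₀) :
    extension i₀ τ T w p = w (τ + p.1) p.2 := by
  rw [extension, halfSpaceProj_of_mem hp₀, min_eq_left hp.2.le, max_eq_right hp.1.le]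

lemma extension_comp_line_eventuallyEq (w : ℝ → EuclideanSpace ℝ (Fin N) → ℝ) (τ : ℝ)
    (hp : p.1 ∈ Ioo 0 T) (hp₀ : p.2 ∈ halfSpace i₀) (v : SpaceTime N) :
    (fun s : ℝ ↦ extension i₀ τ T w (p + s • v))
      =ᶠ[𝓝 0] fun s ↦ w (τ + (p + s • v).1) (p + s • v).2 :=
  ((tendsto_line p v).eventually ((isOpen_Ioo.prod (isOpen_halfSpace i₀)).mem_nhds ⟨hp, hp₀⟩)).mono
    fun _ hs ↦ extension_eq hs.1 hs.2

namespace HalfSpaceInequality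

lemma continuous_extension (hw : HalfSpaceInequality i₀ S C₁ C₂ w) (hτ : 0 ≤ τ) (hT : 0 ≤ T)
    (hτT : τ + T ≤ S) : Continuous (extension i₀ τ T w) := by
  have := continuous_halfSpaceProj i₀
  refine hw.continuousOn.comp_continuous
    (f := fun p : SpaceTime N ↦ (τ + max 0 (min p.1 T), halfSpaceProj i₀ p.2)) (by fun_prop)
    fun p ↦ ⟨⟨add_nonneg hτ (le_max_left _ _), ?_⟩, halfSpaceProj_mem_closure _⟩
  exact (add_le_add_right (max_le hT (min_le_right _ _)) τ).trans hτT

lemma eqOn_zero_closure (hw : HalfSpaceInequality i₀ S C₁ C₂ w) (hτ : τ ∈ Icc 0 S)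
    (hzero : EqOn (w τ) 0 (halfSpace i₀)) : EqOn (w τ) 0 (closure (halfSpace i₀)) :=
  hzero.of_subset_closure
    (hw.continuousOn.comp (by fun_prop : ContinuousOn (fun y ↦ (τ, y)) _) fun _ hy ↦ ⟨hτ, hy⟩)
    continuousOn_const subset_closure subset_rfl

lemma hasHeatAt_extension (hw : HalfSpaceInequality i₀ S C₁ C₂ w) (hτp : τ + p.1 ∈ Ioo 0 S)
    (hp : p.1 ∈ Ioo 0 T) (hp₀ : p.2 ∈ halfSpace i₀) :
    HasHeatAt (extension i₀ τ T w)
      (deriv (fun σ ↦ w σ p.2) (τ + p.1) + lap (w (τ + p.1)) p.2) p := by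
  refine ⟨_, fun i ↦ dirDeriv (EuclideanSpace.single i 1)
    (dirDeriv (EuclideanSpace.single i 1) (w (τ + p.1))) p.2, ?_, fun i ↦ ?_, rfl⟩
  · have htime : HasDerivAt (fun s ↦ w (τ + p.1 + s) p.2) (deriv (fun σ ↦ w σ p.2) (τ + p.1)) 0 :=
      HasDerivAt.comp_const_add (f := fun σ ↦ w σ p.2) _ 0
        (by simpa using (hw.differentiableAt_time _ hp₀ _ hτp).hasDerivAt)
    refine htime.congr_of_eventuallyEq ?_
    filter_upwards [extension_comp_line_eventuallyEq w τ hp hp₀ timeDir] with s hs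
    rw [hs]
    simp [timeDir, add_assoc]
  · have hspace := (hw.contDiffOn_space _ hτp).contDiffAt ((isOpen_halfSpace i₀).mem_nhds hp₀)
    refine (hasSecondDerivAtZero_comp_line hspace _).congr_of_eventuallyEq ?_
    filter_upwards [extension_comp_line_eventuallyEq w τ hp hp₀ (spaceDir i)] with s hs
    rw [hs]
    simp [spaceDir]

lemma isHalfSpaceSolution_extension (hw : HalfSpaceInequality i₀ S C₁ C₂ w) (hτ : 0 ≤ τ)
    (hT : 0 ≤ T) (hτT : τ + T ≤ S) (hzero : EqOn (w τ) 0 (halfSpace i₀)) :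
    IsHalfSpaceSolution i₀ T C₁ C₂ (extension i₀ τ T w) where
  continuous := hw.continuous_extension hτ hT hτT
  eq_zero_of_nonpos p hp := by
    rw [extension, max_eq_left ((min_le_left _ _).trans hp), add_zero]
    exact hw.eqOn_zero_closure ⟨hτ, by linarith⟩ hzero (halfSpaceProj_mem_closure _)
  hasHeatAt p hp hp₀ := by
    have hτp : τ + p.1 ∈ Ioo 0 S := ⟨by linarith [hp.1], by linarith [hp.2]⟩
    refine ⟨_, hw.hasHeatAt_extension hτp hp hp₀, ?_⟩
    rw [extension_eq hp hp₀]
    exact hw.abs_heat_le _ hτp _ hp₀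
  abs_le p hp hp₀ := by
    rw [extension_eq hp hp₀]
    exact hw.abs_le _ ⟨by linarith [hp.1], by linarith [hp.2]⟩ _ hp₀

theorem eqOn_zero_of_lt_add (hw : HalfSpaceInequality i₀ S C₁ C₂ w) (hC₁ : 0 < C₁) (hτ : 0 ≤ τ)
    (hzero : EqOn (w τ) 0 (halfSpace i₀)) {s : ℝ} (hs : s ∈ Ioo τ S)
    (hsτ : s < τ + 1 / (256 * C₁)) : EqOn (w s) 0 (halfSpace i₀) := by
  intro y hy
  set T := min (1 / (256 * C₁)) (S - τ)
  have hsT : s - τ ∈ Ioo 0 T := ⟨sub_pos.2 hs.1, lt_min (by linarith) (by linarith [hs.2])⟩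
  have hτT : τ + T ≤ S := by linarith [min_le_right (1 / (256 * C₁)) (S - τ)]
  have hcT : 256 * C₁ * T ≤ 1 := by
    rw [mul_comm, ← le_div_iff₀ (by positivity)]
    exact min_le_left _ _
  have hvanish := (hw.isHalfSpaceSolution_extension hτ (hsT.1.trans hsT.2).le hτT hzero).eq_zero
    (p := (s - τ, y)) hC₁ hcT hsT hy
  simpa [extension_eq (p := (s - τ, y)) hsT hy] using hvanish

end HalfSpaceInequality

end HalfSpace

lemma forall_mem_Ico_of_forall_lt_add {P : ℝ → Prop} {S δ : ℝ} (hδ : 0 < δ) (h₀ : P 0)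
    (hstep : ∀ τ, 0 ≤ τ → P τ → ∀ s ∈ Ioo τ S, s < τ + δ → P s) : ∀ s ∈ Ico 0 S, P s := by
  have hnat (n : ℕ) : ∀ s ∈ Ico 0 S, s < n * (δ / 2) → P s := by
    induction n with
    | zero => exact fun s hs hlt ↦ absurd hs.1 (by simpa using hlt)
    | succ n ih =>
      intro s hs hlt
      push_cast at hlt
      rcases hs.1.eq_or_lt with rfl | hpos
      · exact h₀
      rcases le_or_gt s (δ / 2) with hle | hgt
      · exact hstep 0 le_rfl h₀ s ⟨hpos, hs.2⟩ (by linarith)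
      · exact hstep (s - δ / 2) (by linarith)
          (ih _ ⟨by linarith, by linarith [hs.2]⟩ (by linarith)) s ⟨by linarith, hs.2⟩ (by linarith)
  intro s hs
  obtain ⟨n, hn⟩ := exists_nat_gt (s / (δ / 2))
  exact hnat n s hs ((div_lt_iff₀ (by positivity)).1 hn)

end BackwardUniqueness

/-- backward uniqueness for the backward heat operator in the half-space
`ℝ^N_+ = {y : y₁ > 0}`: if `w ∈ C^{1,2}([0,S] × closure ℝ^N_+)` satisfies
`|w(s,y)| ≤ e^{C₁|y|²}`, `|w_s + Δw| ≤ C₂|w|` in `(0,S) × ℝ^N_+` and `w(0,·) = 0` on `ℝ^N_+`,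
then `w ≡ 0` on `[0,S) × ℝ^N_+`. -/
theorem backward_uniqueness_halfspace
    (N : ℕ) (hN : 0 < N) (S : ℝ) (hS : 0 < S)
    (w : ℝ → EuclideanSpace ℝ (Fin N) → ℝ)
    (C₁ C₂ : ℝ) (hC₁ : 0 < C₁) (hC₂ : 0 < C₂)
    -- regularity: `w ∈ C^{1,2}([0,S] × closure ℝ^N_+)`
    (hcont : ContinuousOn (fun q : ℝ × EuclideanSpace ℝ (Fin N) => w q.1 q.2)
      (Icc 0 S ×ˢ closure {y : EuclideanSpace ℝ (Fin N) | 0 < y ⟨0, hN⟩}))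
    (hregx : ∀ s ∈ Ioo (0:ℝ) S,
      ContDiffOn ℝ 2 (w s) {y : EuclideanSpace ℝ (Fin N) | 0 < y ⟨0, hN⟩})
    (hregt : ∀ y ∈ {y : EuclideanSpace ℝ (Fin N) | 0 < y ⟨0, hN⟩},
      ∀ s ∈ Ioo (0:ℝ) S, DifferentiableAt ℝ (fun σ => w σ y) s)
    -- growth bound
    (hgrowth : ∀ s ∈ Ioo (0:ℝ) S, ∀ y ∈ {y : EuclideanSpace ℝ (Fin N) | 0 < y ⟨0, hN⟩},
      |w s y| ≤ Real.exp (C₁ * ‖y‖ ^ 2))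
    -- differential inequality for the backward heat operator
    (hineq : ∀ s ∈ Ioo (0:ℝ) S, ∀ y ∈ {y : EuclideanSpace ℝ (Fin N) | 0 < y ⟨0, hN⟩},
      |deriv (fun σ => w σ y) s + lap (w s) y| ≤ C₂ * |w s y|)
    -- vanishing at time `0`
    (hzero : ∀ y ∈ {y : EuclideanSpace ℝ (Fin N) | 0 < y ⟨0, hN⟩}, w 0 y = 0) :
    ∀ s ∈ Ico (0:ℝ) S, ∀ y ∈ {y : EuclideanSpace ℝ (Fin N) | 0 < y ⟨0, hN⟩}, w s y = 0 := by
  have hw : BackwardUniqueness.HalfSpaceInequality ⟨0, hN⟩ S C₁ C₂ w :=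
    ⟨hcont, hregx, hregt, hgrowth, hineq⟩
  have hstep : 0 < 1 / (256 * C₁) := by positivity
  exact BackwardUniqueness.forall_mem_Ico_of_forall_lt_add hstep hzero
    fun _ hτ hzero_τ _ hs hsτ ↦ hw.eqOn_zero_of_lt_add hC₁ hτ hzero_τ hs hsτ
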